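/- For each m ∈ ℕ there is a constant c(m) > 0 such that for all d, k, n ∈ ℕ and every F ∈ 𝔉_d^s one has ρ_m(F^n, F^{n+2k}) ≤ c(m) · k · n^{−1}. -/

import Mathlib

open MeasureTheory RealInnerProductSpace
open scoped ENNReal

noncomputable section

abbrev Euc (d : ℕ) := EuclideanSpace ℝ (Fin d)

/-- Convolution of two measures on an additive structure. -/
def mconv {α : Type*} [MeasurableSpace α] [Add α] (μ ν : Measure α) : Measure α :=
  (μ.prod ν).map (fun p => p.1 + p.2)

/-- Convolution power `μ^{*n}`, with `μ^{*0}` the Dirac measure at `0`. -/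
def convPow {α : Type*} [MeasurableSpace α] [AddMonoid α] (μ : Measure α) : ℕ → Measure α
  | 0 => Measure.dirac 0
  | n + 1 => mconv (convPow μ n) μ

/-- Convolution product of a finite family of measures. -/
def convProd {α : Type*} [MeasurableSpace α] [AddMonoid α] :
    ∀ {n : ℕ}, (Fin n → Measure α) → Measure α
  | 0, _ => Measure.dirac 0
  | n + 1, G => mconv (convProd (fun i : Fin n => G i.castSucc)) (G (Fin.last n))

/-- The compound Poisson measure `e(a·μ) = e^{-a} ∑_k a^k μ^{*k}/k!`. -/
def cpois {α : Type*} [MeasurableSpace α] [AddMonoid α] (a : ℝ) (μ : Measure α) : Measure α :=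
  Measure.sum fun k : ℕ =>
    (ENNReal.ofReal (Real.exp (-a) * a ^ k / k.factorial)) • convPow μ k

/-- A measure is symmetric if it is invariant under `x ↦ -x`. -/
def IsSymmMeasure {d : ℕ} (μ : Measure (Euc d)) : Prop :=
  μ.map (fun x => -x) = μ

/-- Characteristic function of a measure on `ℝ^d`. -/
def charFn {d : ℕ} (μ : Measure (Euc d)) (t : Euc d) : ℂ :=
  ∫ x, Complex.exp ((⟪t, x⟫ : ℂ) * Complex.I) ∂μ

/-- Characteristic function of a measure on `ℝ`. -/
def charFn1 (μ : Measure ℝ) (t : ℝ) : ℂ :=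
  ∫ x, Complex.exp (((t * x : ℝ) : ℂ) * Complex.I) ∂μ

/-- Convex polyhedra determined by the directions `t 1, …, t m`. -/
def polyhedraOn {d m : ℕ} (t : Fin m → Euc d) : Set (Set (Euc d)) :=
  {X | ∃ a b : Fin m → EReal,
    X = {x | ∀ j, a j ≤ ((⟪x, t j⟫ : ℝ) : EReal) ∧ ((⟪x, t j⟫ : ℝ) : EReal) ≤ b j}}

/-- The collection `𝔛_m` of convex polyhedra determined by `m` pairs of parallel hyperplanes. -/
def polyhedra (d m : ℕ) : Set (Set (Euc d)) :=
  {X | ∃ t : Fin m → Euc d, X ∈ polyhedraOn t}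

/-- The distance `ρ_m(G,H) = sup_{X ∈ 𝔛_m} |G{X} - H{X}|`. -/
def rhoPoly {d : ℕ} (m : ℕ) (G H : Measure (Euc d)) : ℝ :=
  ⨆ X ∈ polyhedra d m, |(G X).toReal - (H X).toReal|

/-- The Lévy concentration function `Q(μ, b) = sup_x μ[x, x+b]`. -/
def concFn (μ : Measure ℝ) (b : ℝ) : ℝ :=
  ⨆ x : ℝ, (μ (Set.Icc x (x + b))).toReal

/-- `q(H, X) = inf_{‖t‖=1} Q(𝓛(⟨ξ,t⟩), λ{⟨x,t⟩ : x ∈ X})` where `H = 𝓛(ξ)`. -/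
def qFn {d : ℕ} (H : Measure (Euc d)) (X : Set (Euc d)) : ℝ :=
  ⨅ t ∈ {t : Euc d | ‖t‖ = 1},
    concFn (H.map fun x => ⟪x, t⟫) (volume ((fun x => ⟪x, t⟫) '' X)).toReal

/-- The uniform (Kolmogorov) distance on `ℝ^d`. -/
def kolmDist {d : ℕ} (G H : Measure (Euc d)) : ℝ :=
  ⨆ x : Euc d, |(G {y | ∀ i, y i ≤ x i}).toReal - (H {y | ∀ i, y i ≤ x i}).toReal|

/-- The uniform (Kolmogorov) distance on `ℝ`. -/
def kolmDist1 (G H : Measure ℝ) : ℝ :=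
  ⨆ x : ℝ, |(G (Set.Iic x)).toReal - (H (Set.Iic x)).toReal|

end

/-!
Rounding a large multiple of `(⟨x, t_j⟩)_j` to integers, by an odd rounding which keeps `F`
symmetric, turns `F` into a symmetric probability weight on `(ZMod (2 ^ L)) ^ m` and the polyhedron
into a box.  With `T` the convolution operator of this weight, the theorem for `k = 1` becomes the
bound `|(T ^ n - T ^ (n + 2)) 1_B| ≤ C / n`, uniformly in `L`, in the weight and in the box `B`; the
general case follows by telescoping.

On `ℓ²` one has `‖T ^ n (1 - T ^ 2)‖ = O(1 / n)` because `T` is a self-adjoint contraction, but the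
`ℓ²` norm of `1_B` is not bounded.  The indicator of each side of the box is therefore split into
pieces averaged at dyadic scales, chosen by how far the walk has spread over an arc of that scale.
For such a piece the walk hardly leaves a bounded number of translates of a ball: multiplying the
kernel of `T ^ (2 σ)` by the autocorrelation of a unit bump `φ` loses little mass and makes it
local, while the localised kernel composed with `1 - T ^ 2` still has a small `ℓ²` operator norm, as
one sees on `G × G` by compressing the diagonal walk to functions `φ ⊗ f`.  The unlocalised
remainder is absorbed by strong induction on `n`, and the contributions of the scales form a
geometric series.
-/

section Sequences

variable {a : ℕ → ℝ}

theorem mul_sub_succ_le_of_antitone_diff (h : Antitone fun j ↦ a j - a (j + 1)) {j n : ℕ}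
    (hn : n ≤ j + 1) : n * (a j - a (j + 1)) ≤ a 0 - a n := by
  rw [← Finset.sum_range_sub', ← nsmul_eq_mul]
  simpa only [Finset.card_range] using Finset.card_nsmul_le_sum (Finset.range n)
    (fun i ↦ a i - a (i + 1)) _ fun i hi ↦ h (by have := Finset.mem_range.1 hi; lia)

theorem sub_le_mul_of_antitone_diff (h : Antitone fun j ↦ a j - a (j + 1)) (n : ℕ) :
    a 0 - a n ≤ n * (a 0 - a 1) := by
  rw [← Finset.sum_range_sub', ← nsmul_eq_mul]
  simpa only [Finset.card_range] using
    Finset.sum_le_card_nsmul (Finset.range n) _ _ fun i _ ↦ h (Nat.zero_le i)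

theorem pow_succ_le_mul_pow_of_logConvex (h0 : ∀ j, 0 ≤ a j)
    (h : ∀ j, a (j + 1) ^ 2 ≤ a j * a (j + 2)) (n : ℕ) :
    a n ^ (n + 1) ≤ a 0 * a (n + 1) ^ n := by
  induction n with
  | zero => simp
  | succ n ih =>
    rcases (h0 (n + 1)).eq_or_lt with hz | hpos
    · rw [← hz, zero_pow (by lia)]
      exact mul_nonneg (h0 _) (pow_nonneg (h0 _) _)
    refine le_of_mul_le_mul_right ?_ (pow_pos hpos n)
    calc a (n + 1) ^ (n + 1 + 1) * a (n + 1) ^ n = (a (n + 1) ^ 2) ^ (n + 1) := by ring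
      _ ≤ (a n * a (n + 2)) ^ (n + 1) := pow_le_pow_left₀ (sq_nonneg _) (h n) _
      _ = a n ^ (n + 1) * a (n + 2) ^ (n + 1) := mul_pow _ _ _
      _ ≤ a 0 * a (n + 1) ^ n * a (n + 2) ^ (n + 1) :=
          mul_le_mul_of_nonneg_right ih (pow_nonneg (h0 _) _)
      _ = a 0 * a (n + 2) ^ (n + 1) * a (n + 1) ^ n := by ring

theorem sub_succ_le_of_logConvex (h0 : ∀ j, 0 ≤ a j)
    (h : ∀ j, a (j + 1) ^ 2 ≤ a j * a (j + 2)) {n : ℕ} (hn : n ≠ 0) {κ : ℝ}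
    (hκ : a 0 ≤ Real.exp κ * a n) : a n - a (n + 1) ≤ κ / n * a n := by
  rcases (h0 n).eq_or_lt with hz | hpos
  · simpa [← hz] using h0 (n + 1)
  have hn' : (n : ℝ) ≠ 0 := Nat.cast_ne_zero.2 hn
  have hpow : a n ^ n ≤ (Real.exp (κ / n) * a (n + 1)) ^ n := by
    refine le_of_mul_le_mul_right ?_ hpos
    calc a n ^ n * a n ≤ a 0 * a (n + 1) ^ n := pow_succ_le_mul_pow_of_logConvex h0 h n
      _ ≤ Real.exp κ * a n * a (n + 1) ^ n :=
          mul_le_mul_of_nonneg_right hκ (pow_nonneg (h0 _) _)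
      _ = (Real.exp (κ / n) * a (n + 1)) ^ n * a n := by
          rw [mul_pow, ← Real.exp_nat_mul, mul_div_cancel₀ _ hn']; ring
  have hle : a n ≤ Real.exp (κ / n) * a (n + 1) :=
    (pow_le_pow_iff_left₀ hpos.le (mul_nonneg (Real.exp_pos _).le (h0 _)) hn).1 hpow
  have hlow : Real.exp (-(κ / n)) * a n ≤ a (n + 1) := by
    rw [Real.exp_neg, inv_mul_le_iff₀ (Real.exp_pos _)]; exact hle
  nlinarith [Real.add_one_le_exp (-(κ / n))]

theorem exists_lt_le_mul_succ {R : ℝ} (hR : 0 < R) {n : ℕ} (hn : n ≠ 0)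
    (h : a 0 ≤ R ^ n * a n) : ∃ k < n, a k ≤ R * a (k + 1) := by
  by_contra! hlt
  have hmono : ∀ k ≤ n, k ≠ 0 → R ^ k * a k < a 0 := by
    intro k
    induction k with
    | zero => intro _ h0; exact absurd rfl h0
    | succ k ih =>
      intro hk _
      have hstep : R ^ (k + 1) * a (k + 1) < R ^ k * a k := by
        rw [pow_succ, mul_assoc]; exact mul_lt_mul_of_pos_left (hlt k hk) (pow_pos hR k)
      rcases eq_or_ne k 0 with rfl | hk0
      · simpa using hstep
      · exact hstep.trans (ih (by lia) hk0)
  exact (hmono n le_rfl hn).not_ge h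

end Sequences

noncomputable section

open scoped Matrix

section Euclidean

variable {A : Type*} [Fintype A]

/-- The Euclidean norm of a real function on a finite type (the norm of `A → ℝ` itself is the
supremum norm). -/
def l2norm (f : A → ℝ) : ℝ := ‖WithLp.toLp 2 f‖

theorem l2norm_nonneg (f : A → ℝ) : 0 ≤ l2norm f := norm_nonneg _

theorem l2norm_sq (f : A → ℝ) : l2norm f ^ 2 = f ⬝ᵥ f := by
  rw [l2norm, ← real_inner_self_eq_norm_sq, EuclideanSpace.inner_toLp_toLp]; rfl

theorem l2norm_zero : l2norm (0 : A → ℝ) = 0 := norm_zero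

theorem dotProduct_le_l2norm_mul (f g : A → ℝ) : f ⬝ᵥ g ≤ l2norm f * l2norm g := by
  have h := real_inner_le_norm (WithLp.toLp 2 g) (WithLp.toLp 2 f)
  rwa [EuclideanSpace.inner_toLp_toLp, mul_comm] at h

theorem dotProduct_le_half_l2norm_sq (f g : A → ℝ) :
    f ⬝ᵥ g ≤ (l2norm f ^ 2 + l2norm g ^ 2) / 2 := by
  linarith [dotProduct_le_l2norm_mul f g, two_mul_le_add_sq (l2norm f) (l2norm g)]

theorem l2norm_sub_le_add (f g : A → ℝ) : l2norm (f - g) ≤ l2norm f + l2norm g :=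
  norm_sub_le (WithLp.toLp 2 f) (WithLp.toLp 2 g)

theorem l2norm_sub_le_l2norm_sub_add_l2norm_sub (f g h : A → ℝ) :
    l2norm (f - h) ≤ l2norm (f - g) + l2norm (g - h) :=
  norm_sub_le_norm_sub_add_norm_sub (WithLp.toLp 2 f) (WithLp.toLp 2 g) (WithLp.toLp 2 h)

theorem l2norm_sub_rev (f g : A → ℝ) : l2norm (f - g) = l2norm (g - f) :=
  norm_sub_rev (WithLp.toLp 2 f) (WithLp.toLp 2 g)

theorem l2norm_sq_sub (f g : A → ℝ) :
    l2norm (f - g) ^ 2 = l2norm f ^ 2 - 2 * (f ⬝ᵥ g) + l2norm g ^ 2 := by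
  simp only [l2norm_sq, sub_dotProduct, dotProduct_sub, dotProduct_comm g f]; ring

theorem l2norm_le_l2norm {f g : A → ℝ} (h : ∀ v, |f v| ≤ g v) : l2norm f ≤ l2norm g := by
  rw [← sq_le_sq₀ (l2norm_nonneg _) (l2norm_nonneg _), l2norm_sq, l2norm_sq]
  exact Finset.sum_le_sum fun v _ ↦ by
    rw [← abs_mul_abs_self]; exact mul_self_le_mul_self (abs_nonneg _) (h v)

theorem l2norm_smul (c : ℝ) (f : A → ℝ) : l2norm (c • f) = |c| * l2norm f :=
  norm_smul c (WithLp.toLp 2 f)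

theorem l2norm_sq_smul (c : ℝ) (f : A → ℝ) : l2norm (c • f) ^ 2 = c ^ 2 * l2norm f ^ 2 := by
  rw [l2norm_smul, mul_pow, sq_abs]

theorem l2norm_le_of_forall_dotProduct_le {f : A → ℝ} {β c : ℝ} (hβ : 0 < β) (hc : 0 ≤ c)
    (h : ∀ g, g ⬝ᵥ f ≤ β / 2 * (l2norm g ^ 2 + c ^ 2)) : l2norm f ≤ β * c := by
  refine abs_le_of_sq_le_sq' ?_ (mul_nonneg hβ.le hc) |>.2
  have hf := h (β⁻¹ • f)
  rw [l2norm_sq_smul, smul_dotProduct, ← l2norm_sq, smul_eq_mul] at hf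
  field_simp at hf
  linarith

end Euclidean

section Shift

variable {A : Type*} [AddCommGroup A]

/-- The translate `v ↦ f (v + x)` of a function on a group. -/
def shift (x : A) (f : A → ℝ) : A → ℝ := fun v ↦ f (v + x)

theorem shift_sub (x : A) (f g : A → ℝ) : shift x (f - g) = shift x f - shift x g := rfl

theorem shift_zero (f : A → ℝ) : shift 0 f = f := by
  funext v; simp [shift]

theorem shift_add (x y : A) (f : A → ℝ) : shift (x + y) f = shift x (shift y f) := by
  funext v; simp [shift, add_assoc]

variable [Fintype A]

theorem shift_dotProduct_shift (x : A) (f g : A → ℝ) : shift x f ⬝ᵥ shift x g = f ⬝ᵥ g :=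
  Equiv.sum_comp (Equiv.addRight x) fun v ↦ f v * g v

theorem l2norm_shift (x : A) (f : A → ℝ) : l2norm (shift x f) = l2norm f := by
  rw [← sq_eq_sq₀ (l2norm_nonneg _) (l2norm_nonneg _), l2norm_sq, l2norm_sq,
    shift_dotProduct_shift]

theorem l2norm_sq_half_add_shift (x : A) (f : A → ℝ) :
    l2norm ((2⁻¹ : ℝ) • (f + shift x f)) ^ 2 = (l2norm f ^ 2 + f ⬝ᵥ shift x f) / 2 := by
  rw [l2norm_sq_smul, l2norm_sq, l2norm_sq]
  simp only [add_dotProduct, dotProduct_add, shift_dotProduct_shift, dotProduct_comm (shift x f) f]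
  ring

theorem dotProduct_shift_neg (x : A) (f g : A → ℝ) : f ⬝ᵥ shift (-x) g = shift x f ⬝ᵥ g := by
  rw [← shift_dotProduct_shift x f, ← shift_add, add_neg_cancel, shift_zero]

/-- The seminorm `x ↦ ‖k - shift x k‖₂` on the group, measuring how far `k` is from being
invariant under `x`. -/
def shiftDist (k : A → ℝ) : AddGroupSeminorm A where
  toFun x := l2norm (k - shift x k)
  map_zero' := by rw [shift_zero, sub_self, l2norm_zero]
  neg' x := by
    rw [← l2norm_shift x, shift_sub, ← shift_add, add_neg_cancel, shift_zero, l2norm_sub_rev]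
  add_le' x y := by
    refine (l2norm_sub_le_l2norm_sub_add_l2norm_sub k (shift x k) _).trans_eq ?_
    rw [shift_add, ← shift_sub, l2norm_shift]

theorem shiftDist_apply (k : A → ℝ) (x : A) : shiftDist k x = l2norm (k - shift x k) := rfl

theorem shiftDist_smul (c : ℝ) (k : A → ℝ) (x : A) :
    shiftDist (c • k) x = |c| * shiftDist k x := by
  rw [shiftDist_apply, shiftDist_apply, ← l2norm_smul, smul_sub]; rfl

theorem shiftDist_sq (k : A → ℝ) (x : A) :
    shiftDist k x ^ 2 = 2 * (l2norm k ^ 2 - k ⬝ᵥ shift x k) := by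
  rw [shiftDist_apply, l2norm_sq_sub, l2norm_shift]; ring

end Shift

section WalkOp

variable {G G' A : Type*} [AddCommGroup G] [Fintype G] [AddCommGroup G'] [Fintype G']
  [AddCommGroup A]

/-- The operator of convolution with the push-forward under `π` of the weight `a`. -/
def walkOp (π : G →+ A) (a : G → ℝ) : Module.End ℝ (A → ℝ) where
  toFun f v := ∑ y, a y * f (v - π y)
  map_add' f g := by
    funext v; simp only [Pi.add_apply, mul_add, Finset.sum_add_distrib]
  map_smul' c f := by
    funext v
    simp only [Pi.smul_apply, smul_eq_mul, Finset.mul_sum, mul_left_comm, RingHom.id_apply]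

theorem walkOp_apply (π : G →+ A) (a : G → ℝ) (f : A → ℝ) (v : A) :
    walkOp π a f v = ∑ y, a y * f (v - π y) := rfl

theorem walkOp_shift (π : G →+ A) (a : G → ℝ) (x : A) (f : A → ℝ) :
    walkOp π a (shift x f) = shift x (walkOp π a f) := by
  funext v; simp only [walkOp_apply, shift, sub_add_eq_add_sub]

theorem walkOp_pow_shift (π : G →+ A) (a : G → ℝ) (n : ℕ) (x : A) (f : A → ℝ) :
    (walkOp π a ^ n) (shift x f) = shift x ((walkOp π a ^ n) f) := by
  induction n generalizing f with
  | zero => rfl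
  | succ n ih => rw [pow_succ, Module.End.mul_apply, walkOp_shift, ih, Module.End.mul_apply]

theorem walkOp_commute (π : G →+ A) (π' : G' →+ A) (a : G → ℝ) (b : G' → ℝ) :
    Commute (walkOp π a) (walkOp π' b) := by
  refine LinearMap.ext fun f ↦ funext fun v ↦ ?_
  simp only [Module.End.mul_apply, walkOp_apply, Finset.mul_sum]
  rw [Finset.sum_comm]
  refine Finset.sum_congr rfl fun y _ ↦ Finset.sum_congr rfl fun z _ ↦ ?_
  rw [sub_right_comm, mul_left_comm]

theorem walkOp_sub (π : G →+ A) (a b : G → ℝ) : walkOp π (a - b) = walkOp π a - walkOp π b := by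
  refine LinearMap.ext fun f ↦ funext fun v ↦ ?_
  simp only [LinearMap.sub_apply, Pi.sub_apply, walkOp_apply, sub_mul, Finset.sum_sub_distrib]

theorem walkOp_mono (π : G →+ A) {a : G → ℝ} (ha : ∀ y, 0 ≤ a y) {f g : A → ℝ} (h : f ≤ g) :
    walkOp π a f ≤ walkOp π a g :=
  fun _ ↦ Finset.sum_le_sum fun y _ ↦ mul_le_mul_of_nonneg_left (h _) (ha y)

theorem dotProduct_walkOp [Fintype A] (π : G →+ A) (a : G → ℝ) (f g : A → ℝ) :
    f ⬝ᵥ walkOp π a g = ∑ y, a y * (f ⬝ᵥ shift (-π y) g) := by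
  simp only [dotProduct, walkOp_apply, shift, Finset.mul_sum, ← sub_eq_add_neg]
  rw [Finset.sum_comm]
  simp only [mul_left_comm]

/-- Convolution of functions on a finite abelian group, as a linear map in the second factor. -/
abbrev groupConv (a : G → ℝ) : Module.End ℝ (G → ℝ) := walkOp (AddMonoidHom.id G) a

theorem groupConv_comm (a b : G → ℝ) : groupConv a b = groupConv b a := by
  funext v
  simp only [walkOp_apply, AddMonoidHom.id_apply]
  rw [← Equiv.sum_comp (Equiv.subLeft v)]
  simp only [Equiv.subLeft_apply, sub_sub_cancel, mul_comm]

theorem sum_groupConv (a b : G → ℝ) : ∑ x, groupConv a b x = (∑ x, a x) * ∑ x, b x := by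
  simp only [walkOp_apply, AddMonoidHom.id_apply]
  rw [Finset.sum_comm]
  simp only [← Finset.mul_sum, ← Equiv.subRight_apply, Equiv.sum_comp, ← Finset.sum_mul]

theorem groupConv_nonneg {a b : G → ℝ} (ha : 0 ≤ a) (hb : 0 ≤ b) : 0 ≤ groupConv a b :=
  fun _ ↦ Finset.sum_nonneg fun y _ ↦ mul_nonneg (ha y) (hb _)

theorem walkOp_groupConv (π : G →+ A) (a b : G → ℝ) :
    walkOp π (groupConv a b) = walkOp π a * walkOp π b := by
  refine LinearMap.ext fun f ↦ funext fun v ↦ ?_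
  simp only [Module.End.mul_apply, walkOp_apply, AddMonoidHom.id_apply, Finset.mul_sum,
    Finset.sum_mul]
  rw [Finset.sum_comm]
  refine Finset.sum_congr rfl fun y _ ↦ ?_
  rw [← Equiv.sum_comp (Equiv.addRight y)]
  refine Finset.sum_congr rfl fun z _ ↦ ?_
  simp only [Equiv.coe_addRight, add_sub_cancel_right, map_add, sub_sub, add_comm (π z), mul_assoc]

open Classical in
/-- The `n`-th convolution power of a function on a finite abelian group. -/
def convPower (a : G → ℝ) (n : ℕ) : G → ℝ := (groupConv a ^ n) (Pi.single 0 1)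

theorem convPower_succ (a : G → ℝ) (n : ℕ) :
    convPower a (n + 1) = groupConv a (convPower a n) := by
  rw [convPower, pow_succ', Module.End.mul_apply, convPower]

theorem walkOp_convPower (π : G →+ A) (a : G → ℝ) (n : ℕ) :
    walkOp π (convPower a n) = walkOp π a ^ n := by
  classical
  induction n with
  | zero =>
    refine LinearMap.ext fun f ↦ funext fun v ↦ ?_
    simp [walkOp_apply, convPower, Pi.single_apply]
  | succ n ih => rw [convPower_succ, walkOp_groupConv, ih, pow_succ']

theorem groupConv_sub (a b f : G → ℝ) : groupConv (a - b) f = groupConv a f - groupConv b f := by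
  rw [groupConv, walkOp_sub, LinearMap.sub_apply]

theorem groupConv_assoc (a b f : G → ℝ) :
    groupConv (groupConv a b) f = groupConv a (groupConv b f) := by
  rw [groupConv, walkOp_groupConv, Module.End.mul_apply]

theorem groupConv_convPower (a : G → ℝ) (n : ℕ) : groupConv (convPower a n) = groupConv a ^ n :=
  walkOp_convPower _ a n

end WalkOp

/-- A symmetric probability weight on a finite abelian group. -/
structure IsSymmProb {G : Type*} [AddCommGroup G] [Fintype G] (F : G → ℝ) : Prop where
  nonneg (y : G) : 0 ≤ F y
  sum_eq_one : ∑ y, F y = 1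
  even (y : G) : F (-y) = F y

namespace IsSymmProb

variable {G A : Type*} [AddCommGroup G] [Fintype G] [AddCommGroup A] {F F' : G → ℝ}

protected theorem groupConv (hF : IsSymmProb F) (hF' : IsSymmProb F') :
    IsSymmProb (groupConv F F') where
  nonneg := groupConv_nonneg hF.nonneg hF'.nonneg
  sum_eq_one := by rw [sum_groupConv, hF.sum_eq_one, hF'.sum_eq_one, mul_one]
  even x := by
    simp only [walkOp_apply, AddMonoidHom.id_apply]
    rw [← Equiv.sum_comp (Equiv.neg G)]
    refine Finset.sum_congr rfl fun y _ ↦ ?_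
    rw [Equiv.neg_apply, hF.even, ← hF'.even, neg_sub, sub_neg_eq_add, add_comm, ← sub_eq_add_neg]

protected theorem convPower (hF : IsSymmProb F) (n : ℕ) : IsSymmProb (convPower F n) := by
  classical
  induction n with
  | zero =>
    refine ⟨fun y ↦ ?_, ?_, fun y ↦ ?_⟩
    · simp only [convPower, pow_zero, Module.End.one_apply, Pi.single_apply]
      split_ifs <;> norm_num
    · simp [convPower]
    · simp [convPower, Pi.single_apply]
  | succ n ih => rw [convPower_succ]; exact hF.groupConv ih

theorem walkOp_le (hF : IsSymmProb F) (π : G →+ A) {f : A → ℝ} {c : ℝ} (h : ∀ v, f v ≤ c)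
    (v : A) : walkOp π F f v ≤ c := by
  calc walkOp π F f v ≤ ∑ y, F y * c :=
        Finset.sum_le_sum fun y _ ↦ mul_le_mul_of_nonneg_left (h _) (hF.nonneg y)
    _ = c := by rw [← Finset.sum_mul, hF.sum_eq_one, one_mul]

theorem walkOp_pow_le (hF : IsSymmProb F) (π : G →+ A) (n : ℕ) {f : A → ℝ} {c : ℝ}
    (h : ∀ v, f v ≤ c) (v : A) : (walkOp π F ^ n) f v ≤ c := by
  rw [← walkOp_convPower]; exact (hF.convPower n).walkOp_le π h v

theorem walkOp_pow_one (hF : IsSymmProb F) (π : G →+ A) (n : ℕ) : (walkOp π F ^ n) 1 = 1 := by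
  rw [← walkOp_convPower]
  funext v
  simp only [walkOp_apply, Pi.one_apply, mul_one, (hF.convPower n).sum_eq_one]

theorem walkOp_pow_mono (hF : IsSymmProb F) (π : G →+ A) (n : ℕ) {f g : A → ℝ} (h : f ≤ g) :
    (walkOp π F ^ n) f ≤ (walkOp π F ^ n) g := by
  rw [← walkOp_convPower]; exact walkOp_mono π (hF.convPower n).nonneg h

theorem walkOp_pow_nonneg (hF : IsSymmProb F) (π : G →+ A) (n : ℕ) {f : A → ℝ} (h : 0 ≤ f) :
    0 ≤ (walkOp π F ^ n) f := by
  rw [← map_zero (walkOp π F ^ n)]; exact hF.walkOp_pow_mono π n h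

variable [Fintype A]

theorem walkOp_dotProduct (hF : IsSymmProb F) (π : G →+ A) (f g : A → ℝ) :
    walkOp π F f ⬝ᵥ g = f ⬝ᵥ walkOp π F g := by
  rw [dotProduct_comm, dotProduct_walkOp, dotProduct_walkOp, ← Equiv.sum_comp (Equiv.neg G)]
  refine Finset.sum_congr rfl fun y _ ↦ ?_
  rw [Equiv.neg_apply, map_neg, hF.even, dotProduct_shift_neg, dotProduct_comm]

theorem walkOp_pow_dotProduct (hF : IsSymmProb F) (π : G →+ A) (n : ℕ) (f g : A → ℝ) :
    (walkOp π F ^ n) f ⬝ᵥ g = f ⬝ᵥ (walkOp π F ^ n) g := by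
  rw [← walkOp_convPower]; exact (hF.convPower n).walkOp_dotProduct π f g

end IsSymmProb

section Energy

variable {G A : Type*} [AddCommGroup G] [Fintype G] [AddCommGroup A] [Fintype A]

/-- The squared norm `‖T ^ j f‖₂²`, where `T` is the convolution operator of `F`. -/
def powNormSq (π : G →+ A) (F : G → ℝ) (f : A → ℝ) (j : ℕ) : ℝ :=
  l2norm ((walkOp π F ^ j) f) ^ 2

theorem powNormSq_nonneg (π : G →+ A) (F : G → ℝ) (f : A → ℝ) (j : ℕ) :
    0 ≤ powNormSq π F f j := sq_nonneg _

theorem powNormSq_zero (π : G →+ A) (F : G → ℝ) (f : A → ℝ) :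
    powNormSq π F f 0 = l2norm f ^ 2 := rfl

/-- The Dirichlet energy of `f` for the random walk on `A` whose steps are the images under `π` of
steps with law `a`. -/
def dirichletEnergy (π : G →+ A) (a : G → ℝ) (f : A → ℝ) : ℝ :=
  ∑ y, a y * shiftDist f (π y) ^ 2

theorem dirichletEnergy_nonneg (π : G →+ A) {a : G → ℝ} (ha : ∀ y, 0 ≤ a y) (f : A → ℝ) :
    0 ≤ dirichletEnergy π a f :=
  Finset.sum_nonneg fun y _ ↦ mul_nonneg (ha y) (sq_nonneg _)

theorem dirichletEnergy_le_add (π π' : G →+ A) {a : G → ℝ} (ha : ∀ y, 0 ≤ a y) (f : A → ℝ) :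
    dirichletEnergy π a f ≤ 2 * dirichletEnergy (π + π') a f + 2 * dirichletEnergy π' a f := by
  simp only [dirichletEnergy, Finset.mul_sum, ← Finset.sum_add_distrib, mul_left_comm (2 : ℝ),
    ← mul_add]
  refine Finset.sum_le_sum fun y _ ↦ mul_le_mul_of_nonneg_left ?_ (ha y)
  have htri : shiftDist f (π y) ≤ shiftDist f ((π + π') y) + shiftDist f (π' y) := by
    simpa using map_sub_le_add (shiftDist f) ((π + π') y) (π' y)
  have hsq := pow_le_pow_left₀ (apply_nonneg (shiftDist f) _) htri 2
  linarith [two_mul_le_add_sq (shiftDist f ((π + π') y)) (shiftDist f (π' y))]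

namespace IsSymmProb

variable {F : G → ℝ}

theorem two_mul_dotProduct_sub_walkOp (hF : IsSymmProb F) (π : G →+ A) (f g : A → ℝ) :
    2 * (f ⬝ᵥ (g - walkOp π F g))
      = ∑ y, F y * ((f - shift (π y) f) ⬝ᵥ (g - shift (π y) g)) := by
  have hterm (y : G) : (f - shift (π y) f) ⬝ᵥ (g - shift (π y) g)
      = 2 * (f ⬝ᵥ g) - f ⬝ᵥ shift (π y) g - f ⬝ᵥ shift (-π y) g := by
    rw [dotProduct_shift_neg, sub_dotProduct, dotProduct_sub, dotProduct_sub,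
      shift_dotProduct_shift]
    ring
  have hpos : ∑ y, F y * (f ⬝ᵥ shift (π y) g) = f ⬝ᵥ walkOp π F g := by
    rw [dotProduct_walkOp, ← Equiv.sum_comp (Equiv.neg G)]
    simp only [Equiv.neg_apply, hF.even, map_neg]
  simp only [hterm, mul_sub, Finset.sum_sub_distrib, hpos, ← dotProduct_walkOp, ← Finset.sum_mul,
    hF.sum_eq_one, dotProduct_sub]
  ring

theorem dirichletEnergy_eq (hF : IsSymmProb F) (π : G →+ A) (f : A → ℝ) :
    dirichletEnergy π F f = 2 * (f ⬝ᵥ (f - walkOp π F f)) := by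
  simp only [hF.two_mul_dotProduct_sub_walkOp, dirichletEnergy, shiftDist_apply, l2norm_sq]

theorem dotProduct_sub_walkOp_le (hF : IsSymmProb F) (π : G →+ A) (f g : A → ℝ) :
    f ⬝ᵥ (g - walkOp π F g) ≤ (dirichletEnergy π F f + dirichletEnergy π F g) / 4 := by
  have hsum : ∑ y, F y * ((f - shift (π y) f) ⬝ᵥ (g - shift (π y) g))
      ≤ (dirichletEnergy π F f + dirichletEnergy π F g) / 2 := by
    simp only [dirichletEnergy, ← Finset.sum_add_distrib, ← mul_add, Finset.sum_div, mul_div_assoc]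
    exact Finset.sum_le_sum fun y _ ↦
      mul_le_mul_of_nonneg_left (dotProduct_le_half_l2norm_sq _ _) (hF.nonneg y)
  linarith [hF.two_mul_dotProduct_sub_walkOp π f g]

theorem walkOp_pow_dotProduct_walkOp_pow (hF : IsSymmProb F) (π : G →+ A) (f : A → ℝ)
    {i j k : ℕ} (h : i + j = 2 * k) :
    (walkOp π F ^ i) f ⬝ᵥ (walkOp π F ^ j) f = powNormSq π F f k := by
  rw [powNormSq, l2norm_sq, hF.walkOp_pow_dotProduct, hF.walkOp_pow_dotProduct π k,
    ← Module.End.mul_apply, ← Module.End.mul_apply, ← pow_add, ← pow_add, h, two_mul]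

theorem dirichletEnergy_convPower_two (hF : IsSymmProb F) (π : G →+ A) (f : A → ℝ) (j : ℕ) :
    dirichletEnergy π (convPower F 2) ((walkOp π F ^ j) f)
      = 2 * (powNormSq π F f j - powNormSq π F f (j + 1)) := by
  rw [(hF.convPower 2).dirichletEnergy_eq, walkOp_convPower, ← Module.End.mul_apply, ← pow_add,
    dotProduct_sub, hF.walkOp_pow_dotProduct_walkOp_pow π f (two_mul j).symm,
    hF.walkOp_pow_dotProduct_walkOp_pow π f (k := j + 1) (by ring)]

theorem powNormSq_antitone (hF : IsSymmProb F) (π : G →+ A) (f : A → ℝ) :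
    Antitone (powNormSq π F f) :=
  antitone_nat_of_succ_le fun j ↦ by
    linarith [hF.dirichletEnergy_convPower_two π f j,
      dirichletEnergy_nonneg π (hF.convPower 2).nonneg ((walkOp π F ^ j) f)]

theorem powNormSq_diff_antitone (hF : IsSymmProb F) (π : G →+ A) (f : A → ℝ) :
    Antitone fun j ↦ powNormSq π F f j - powNormSq π F f (j + 1) :=
  antitone_nat_of_succ_le fun j ↦ by
    have h := sq_nonneg (l2norm ((walkOp π F ^ j) f - (walkOp π F ^ (j + 2)) f))
    rw [l2norm_sq_sub, hF.walkOp_pow_dotProduct_walkOp_pow π f (k := j + 1) (by ring)] at h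
    simp only [powNormSq] at h ⊢
    linarith

theorem powNormSq_logConvex (hF : IsSymmProb F) (π : G →+ A) (f : A → ℝ) (j : ℕ) :
    powNormSq π F f (j + 1) ^ 2 ≤ powNormSq π F f j * powNormSq π F f (j + 2) := by
  have h := dotProduct_le_l2norm_mul ((walkOp π F ^ j) f) ((walkOp π F ^ (j + 2)) f)
  rw [hF.walkOp_pow_dotProduct_walkOp_pow π f (k := j + 1) (by ring)] at h
  simpa only [mul_pow, powNormSq] using pow_le_pow_left₀ (powNormSq_nonneg π F f _) h 2

theorem l2norm_walkOp_pow_le (hF : IsSymmProb F) (π : G →+ A) (n : ℕ) (f : A → ℝ) :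
    l2norm ((walkOp π F ^ n) f) ≤ l2norm f := by
  have h := hF.powNormSq_antitone π f (Nat.zero_le n)
  rw [powNormSq_zero, powNormSq] at h
  exact (sq_le_sq₀ (l2norm_nonneg _) (l2norm_nonneg _)).1 h

theorem dirichletEnergy_convPower_two_le (hF : IsSymmProb F) (π : G →+ A) (f : A → ℝ) (j : ℕ) :
    dirichletEnergy π (convPower F 2) ((walkOp π F ^ j) f) ≤ 2 / (j + 1) * l2norm f ^ 2 := by
  have h := mul_sub_succ_le_of_antitone_diff (hF.powNormSq_diff_antitone π f) (le_refl (j + 1))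
  rw [hF.dirichletEnergy_convPower_two, div_mul_eq_mul_div, le_div_iff₀ (by positivity)]
  push_cast at h
  linarith [powNormSq_nonneg π F f (j + 1), powNormSq_zero π F f]

end IsSymmProb

end Energy

section Tensor

variable {G : Type*}

/-- The function `(u, v) ↦ φ u * f v` on `G × G`. -/
def tensor (φ f : G → ℝ) : G × G → ℝ := fun p ↦ φ p.1 * f p.2

theorem tensor_dotProduct_tensor [Fintype G] (φ f ψ g : G → ℝ) :
    tensor φ f ⬝ᵥ tensor ψ g = (φ ⬝ᵥ ψ) * (f ⬝ᵥ g) := by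
  simp only [dotProduct, tensor, Fintype.sum_prod_type, Finset.sum_mul_sum, mul_mul_mul_comm]

theorem l2norm_sq_tensor [Fintype G] (φ f : G → ℝ) :
    l2norm (tensor φ f) ^ 2 = l2norm φ ^ 2 * l2norm f ^ 2 := by
  simp only [l2norm_sq, tensor_dotProduct_tensor]

/-- The diagonal homomorphism `x ↦ (x, x)`, as the sum of the two coordinate inclusions. -/
abbrev diagHom (G : Type*) [AddCommGroup G] : G →+ G × G :=
  AddMonoidHom.inr G G + AddMonoidHom.inl G G

theorem shift_diagHom_tensor [AddCommGroup G] (x : G) (φ f : G → ℝ) :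
    shift (diagHom G x) (tensor φ f) = tensor (shift x φ) (shift x f) := by
  funext p; simp [shift, tensor]

end Tensor

section Localization

variable {G : Type*} [AddCommGroup G] [Fintype G]

/-- The autocorrelation `x ↦ ∑ v, φ v * φ (v + x)`. -/
def autocorr (φ : G → ℝ) (x : G) : ℝ := φ ⬝ᵥ shift x φ

theorem autocorr_neg (φ : G → ℝ) (x : G) : autocorr φ (-x) = autocorr φ x := by
  rw [autocorr, dotProduct_shift_neg, dotProduct_comm, autocorr]

theorem autocorr_nonneg {φ : G → ℝ} (h : 0 ≤ φ) (x : G) : 0 ≤ autocorr φ x :=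
  Finset.sum_nonneg fun _ _ ↦ mul_nonneg (h _) (h _)

theorem one_sub_autocorr {φ : G → ℝ} (h : l2norm φ = 1) (x : G) :
    1 - autocorr φ x = shiftDist φ x ^ 2 / 2 := by
  rw [shiftDist_sq, h, autocorr]; ring

theorem autocorr_le_one {φ : G → ℝ} (h : l2norm φ = 1) (x : G) : autocorr φ x ≤ 1 := by
  linarith [one_sub_autocorr h x, sq_nonneg (shiftDist φ x)]

/-- The mass which the weight `a` loses when it is multiplied by the autocorrelation of `φ`. -/
def lostMass (a φ : G → ℝ) : ℝ := ∑ y, a y * (1 - autocorr φ y)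

theorem lostMass_eq (a : G → ℝ) {φ : G → ℝ} (h : l2norm φ = 1) :
    lostMass a φ = dirichletEnergy (AddMonoidHom.id G) a φ / 2 := by
  simp only [lostMass, dirichletEnergy, one_sub_autocorr h, Finset.sum_div, mul_div_assoc,
    AddMonoidHom.id_apply]

theorem IsSymmProb.lostMass_convPower_le {F : G → ℝ} (hF : IsSymmProb F) {φ : G → ℝ}
    (h : l2norm φ = 1) (σ : ℕ) :
    lostMass (convPower F (2 * σ)) φ ≤ σ * lostMass (convPower F 2) φ := by
  have hloss (s : ℕ) : lostMass (convPower F (2 * s)) φ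
      = powNormSq (AddMonoidHom.id G) F φ 0 - powNormSq (AddMonoidHom.id G) F φ s := by
    rw [lostMass_eq _ h, (hF.convPower _).dirichletEnergy_eq, dotProduct_sub, walkOp_convPower,
      ← hF.walkOp_pow_dotProduct_walkOp_pow _ φ (zero_add (2 * 0)),
      ← hF.walkOp_pow_dotProduct_walkOp_pow _ φ (zero_add (2 * s)), pow_zero,
      Module.End.one_apply]
    ring
  rw [hloss, ← mul_one 2, hloss]
  exact sub_le_mul_of_antitone_diff (hF.powNormSq_diff_antitone _ φ) σ

theorem tensor_sub_walkOp (φ a g : G → ℝ) :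
    tensor φ (g - groupConv a g)
      = tensor φ g - walkOp (AddMonoidHom.inr G G) a (tensor φ g) := by
  funext p
  simp only [tensor, Pi.sub_apply, walkOp_apply, mul_sub, Finset.mul_sum, AddMonoidHom.id_apply,
    AddMonoidHom.inr_apply, Prod.fst_sub, Prod.snd_sub, sub_zero, mul_left_comm]

theorem dotProduct_groupConv_autocorr_mul (φ a f g : G → ℝ) :
    f ⬝ᵥ groupConv (autocorr φ * a) g = tensor φ f ⬝ᵥ walkOp (diagHom G) a (tensor φ g) := by
  simp only [dotProduct_walkOp, AddMonoidHom.id_apply, Pi.mul_apply]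
  refine Finset.sum_congr rfl fun y _ ↦ ?_
  rw [← map_neg, shift_diagHom_tensor, tensor_dotProduct_tensor, ← autocorr_neg, autocorr]
  ring

theorem dirichletEnergy_inl_tensor (a f : G → ℝ) {φ : G → ℝ} (h : l2norm φ = 1) :
    dirichletEnergy (AddMonoidHom.inl G G) a (tensor φ f) = 2 * lostMass a φ * l2norm f ^ 2 := by
  rw [lostMass, Finset.mul_sum, Finset.sum_mul]
  refine Finset.sum_congr rfl fun y _ ↦ ?_
  have hshift : tensor φ f - shift (AddMonoidHom.inl G G y) (tensor φ f)
      = tensor (φ - shift y φ) f := by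
    funext p; simp [shift, tensor, sub_mul]
  rw [shiftDist_apply, hshift, l2norm_sq_tensor, one_sub_autocorr h, shiftDist_apply]
  ring

namespace IsSymmProb

variable {F : G → ℝ}

theorem shiftDist_walkOp_pow_le {A : Type*} [AddCommGroup A] [Fintype A] (hF : IsSymmProb F)
    (π : G →+ A) (n : ℕ) (f : A → ℝ) (x : A) :
    shiftDist ((walkOp π F ^ n) f) x ≤ shiftDist f x := by
  rw [shiftDist_apply, ← walkOp_pow_shift, ← map_sub]
  exact hF.l2norm_walkOp_pow_le π n _

theorem dirichletEnergy_inr_le (hF : IsSymmProb F) {φ : G → ℝ} (h : l2norm φ = 1) (σ : ℕ)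
    (f : G → ℝ) :
    dirichletEnergy (AddMonoidHom.inr G G) (convPower F 2)
        ((walkOp (diagHom G) F ^ σ) (tensor φ f))
      ≤ 2 * (2 / (σ + 1) + 2 * lostMass (convPower F 2) φ) * l2norm f ^ 2 := by
  have hF2 := hF.convPower 2
  have hdiag := hF.dirichletEnergy_convPower_two_le (diagHom G) (tensor φ f) σ
  rw [l2norm_sq_tensor, h, one_pow, one_mul] at hdiag
  have hinl : dirichletEnergy (AddMonoidHom.inl G G) (convPower F 2)
      ((walkOp (diagHom G) F ^ σ) (tensor φ f))
      ≤ 2 * lostMass (convPower F 2) φ * l2norm f ^ 2 := by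
    rw [← dirichletEnergy_inl_tensor _ f h]
    exact Finset.sum_le_sum fun y _ ↦ mul_le_mul_of_nonneg_left
      (pow_le_pow_left₀ (apply_nonneg _ _) (hF.shiftDist_walkOp_pow_le _ σ _ _) 2) (hF2.nonneg y)
  linarith [dirichletEnergy_le_add (AddMonoidHom.inr G G) (AddMonoidHom.inl G G) hF2.nonneg
    ((walkOp (diagHom G) F ^ σ) (tensor φ f))]

theorem lostMass_nonneg (hF : IsSymmProb F) {φ : G → ℝ} (h : l2norm φ = 1) : 0 ≤ lostMass F φ :=
  Finset.sum_nonneg fun y _ ↦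
    mul_nonneg (hF.nonneg y) (sub_nonneg.2 (autocorr_le_one h y))

/- Multiplying a kernel by the autocorrelation of `φ` compresses the diagonal walk on `G × G` to
`φ ⊗ ·`.  There the step of the second coordinate alone, which is what the factor
`g - groupConv (convPower F 2) g` involves, is a diagonal step (controlled by the smoothing effect
of `σ` diagonal steps) minus a step of the first coordinate (which `φ` hardly feels). -/
theorem l2norm_groupConv_autocorr_mul_le (hF : IsSymmProb F) {φ : G → ℝ} (h : l2norm φ = 1)
    (σ : ℕ) (g : G → ℝ) :
    l2norm (groupConv (autocorr φ * convPower F (2 * σ)) (g - groupConv (convPower F 2) g))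
      ≤ (2 / (σ + 1) + 2 * lostMass (convPower F 2) φ) * l2norm g := by
  have hF2 := hF.convPower 2
  set T := walkOp (diagHom G) F
  have hβ : 0 < 2 / ((σ : ℝ) + 1) + 2 * lostMass (convPower F 2) φ :=
    add_pos_of_pos_of_nonneg (by positivity) (by linarith [hF2.lostMass_nonneg h])
  refine l2norm_le_of_forall_dotProduct_le hβ (l2norm_nonneg g) fun f ↦ ?_
  calc f ⬝ᵥ groupConv (autocorr φ * convPower F (2 * σ)) (g - groupConv (convPower F 2) g)
      = tensor φ f ⬝ᵥ (T ^ (2 * σ)) (tensor φ (g - groupConv (convPower F 2) g)) := by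
        rw [dotProduct_groupConv_autocorr_mul, walkOp_convPower]
    _ = (T ^ σ) (tensor φ f) ⬝ᵥ ((T ^ σ) (tensor φ g)
          - walkOp (AddMonoidHom.inr G G) (convPower F 2) ((T ^ σ) (tensor φ g))) := by
        have hcomm := ((walkOp_commute (diagHom G) (AddMonoidHom.inr G G) F
          (convPower F 2)).pow_left σ).eq
        rw [two_mul, pow_add, Module.End.mul_apply, ← hF.walkOp_pow_dotProduct, tensor_sub_walkOp,
          map_sub, ← Module.End.mul_apply, hcomm, Module.End.mul_apply]
    _ ≤ _ := by
        linarith [hF2.dotProduct_sub_walkOp_le (AddMonoidHom.inr G G) ((T ^ σ) (tensor φ f))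
          ((T ^ σ) (tensor φ g)), hF.dirichletEnergy_inr_le h σ f,
          hF.dirichletEnergy_inr_le h σ g]

end IsSymmProb

end Localization

section LocalKernel

open Function Pointwise

theorem sum_abs_mul_le_of_off_le {G : Type*} [Fintype G] {X h W : G → ℝ} {S : Finset G} {η Q : ℝ}
    (hη : 0 ≤ η) (h0 : 0 ≤ h) (hle : ∀ z, h z ≤ η) (hQ : ∑ z ∈ S, h z ≤ Q) (hW : 0 ≤ W)
    (hoff : ∀ z ∉ S, |X z| ≤ W z) :
    ∑ z, |X z| * h z ≤ l2norm X * √(η * Q) + (∑ z, W z) * η := by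
  classical
  rw [← Finset.sum_add_sum_compl S]
  refine add_le_add ?_ ?_
  · have hX : ∑ z ∈ S, |X z| ^ 2 ≤ l2norm X ^ 2 := by
      rw [l2norm_sq]
      simp only [sq_abs, dotProduct, ← pow_two]
      exact Finset.sum_le_univ_sum_of_nonneg fun z ↦ sq_nonneg (X z)
    have hh : ∑ z ∈ S, h z ^ 2 ≤ η * Q := by
      refine le_trans ?_ (mul_le_mul_of_nonneg_left hQ hη)
      rw [Finset.mul_sum]
      exact Finset.sum_le_sum fun z _ ↦ by
        rw [pow_two]; exact mul_le_mul_of_nonneg_right (hle z) (h0 z)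
    refine (Real.sum_mul_le_sqrt_mul_sqrt S _ _).trans ?_
    exact mul_le_mul (Real.sqrt_le_iff.2 ⟨l2norm_nonneg X, hX⟩) (Real.sqrt_le_sqrt hh)
      (Real.sqrt_nonneg _) (l2norm_nonneg X)
  · calc ∑ z ∈ Sᶜ, |X z| * h z ≤ ∑ z ∈ Sᶜ, W z * η := Finset.sum_le_sum fun z hz ↦
          mul_le_mul (hoff z (Finset.mem_compl.1 hz)) (hle z) (h0 z) (hW z)
      _ ≤ ∑ z, W z * η := Finset.sum_le_univ_sum_of_nonneg fun z ↦ mul_nonneg (hW z) hη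
      _ = (∑ z, W z) * η := by rw [Finset.sum_mul]

variable {G A : Type*} [AddCommGroup G] [Fintype G] [AddCommGroup A]

/-- The difference `T ^ n - T ^ (n + 2)` of powers of the convolution operator of `F`. -/
def powDiff (π : G →+ A) (F : G → ℝ) (n : ℕ) : Module.End ℝ (A → ℝ) :=
  walkOp π F ^ n - walkOp π F ^ (n + 2)

theorem powDiff_add (π : G →+ A) (F : G → ℝ) (n s : ℕ) :
    powDiff π F (n + s) = walkOp π F ^ n * powDiff π F s := by
  rw [powDiff, powDiff, mul_sub, ← pow_add, ← pow_add, add_assoc]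

theorem abs_walkOp_le (π : G →+ A) {a : G → ℝ} (ha : ∀ y, 0 ≤ a y) (f : A → ℝ) :
    |walkOp π a f| ≤ walkOp π a |f| := fun v ↦
  (Finset.abs_sum_le_sum_abs _ _).trans_eq <| Finset.sum_congr rfl fun y _ ↦ by
    rw [abs_mul, abs_of_nonneg (ha y), Pi.abs_apply]

theorem abs_groupConv_le (a f : G → ℝ) (v : G) :
    |groupConv a f v| ≤ ∑ z, |a z| * |f| (v - z) :=
  (Finset.abs_sum_le_sum_abs _ _).trans_eq <| Finset.sum_congr rfl fun _ _ ↦ abs_mul _ _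

theorem abs_groupConv_le_mul (a : G → ℝ) {f : G → ℝ} {B : ℝ} (hf : ∀ v, |f v| ≤ B) (v : G) :
    |groupConv a f v| ≤ (∑ z, |a z|) * B := by
  rw [Finset.sum_mul]
  exact (abs_groupConv_le a f v).trans
    (Finset.sum_le_sum fun z _ ↦ mul_le_mul_of_nonneg_left (hf _) (abs_nonneg _))

theorem IsSymmProb.abs_walkOp_pow_le {F : G → ℝ} (hF : IsSymmProb F) (π : G →+ A) (n : ℕ)
    (f : A → ℝ) : |(walkOp π F ^ n) f| ≤ (walkOp π F ^ n) |f| := by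
  rw [← walkOp_convPower]; exact abs_walkOp_le π (hF.convPower n).nonneg f

theorem support_groupConv_subset (a b : G → ℝ) :
    support (groupConv a b) ⊆ support a + support b := by
  intro x hx
  obtain ⟨y, -, hy⟩ := Finset.exists_ne_zero_of_sum_ne_zero hx
  exact ⟨y, left_ne_zero_of_mul hy, x - y, right_ne_zero_of_mul hy, add_sub_cancel _ _⟩

theorem support_autocorr_subset (φ : G → ℝ) :
    support (autocorr φ) ⊆ support φ - support φ := by
  intro x hx
  obtain ⟨v, -, hv⟩ := Finset.exists_ne_zero_of_sum_ne_zero hx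
  exact ⟨v + x, right_ne_zero_of_mul hv, v, left_ne_zero_of_mul hv, add_sub_cancel_left _ _⟩

theorem IsSymmProb.sum_walkOp_pow_sub_le {F : G → ℝ} (hF : IsSymmProb F) (π : G →+ A) (n : ℕ)
    {f : A → ℝ} {S : Finset A} {Q : ℝ} (h : ∀ x, ∑ z ∈ S, f (x - z) ≤ Q) (x : A) :
    ∑ z ∈ S, (walkOp π F ^ n) f (x - z) ≤ Q := by
  have heq : ∑ z ∈ S, (walkOp π F ^ n) f (x - z)
      = (walkOp π F ^ n) (∑ z ∈ S, shift (-z) f) x := by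
    simp only [map_sum, walkOp_pow_shift, Finset.sum_apply, shift, sub_eq_add_neg]
  rw [heq]
  refine hF.walkOp_pow_le π n (fun y ↦ ?_) x
  simpa only [Finset.sum_apply, shift, ← sub_eq_add_neg] using h y

/-- The kernel of `T ^ (2 * σ) - T ^ (2 * σ + 2)` after the factor `T ^ (2 * σ)` has been localised
by the autocorrelation of `φ`. -/
def localKernel (F φ : G → ℝ) (σ : ℕ) : G → ℝ :=
  autocorr φ * convPower F (2 * σ)
    - groupConv (convPower F 2) (autocorr φ * convPower F (2 * σ))

theorem groupConv_localKernel (F φ : G → ℝ) (σ : ℕ) (g : G → ℝ) :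
    groupConv (localKernel F φ σ) g
      = groupConv (autocorr φ * convPower F (2 * σ)) (g - groupConv (convPower F 2) g) := by
  rw [localKernel, groupConv_sub, groupConv_comm (convPower F 2), groupConv_assoc, map_sub]

theorem powDiff_eq_localKernel_add (F φ : G → ℝ) (n σ : ℕ) (g : G → ℝ) :
    powDiff (AddMonoidHom.id G) F (n + 2 * σ) g
      = groupConv (localKernel F φ σ) ((groupConv F ^ n) g)
        + groupConv ((1 - autocorr φ) * convPower F (2 * σ))
          (powDiff (AddMonoidHom.id G) F n g) := by
  have hdiff (s : ℕ) : powDiff (AddMonoidHom.id G) F s g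
      = (groupConv F ^ s) g - groupConv (convPower F 2) ((groupConv F ^ s) g) := by
    rw [powDiff, LinearMap.sub_apply, groupConv_convPower, ← Module.End.mul_apply, ← pow_add,
      add_comm 2]
  have hcomm : powDiff (AddMonoidHom.id G) F (n + 2 * σ) g
      = groupConv (convPower F (2 * σ)) (powDiff (AddMonoidHom.id G) F n g) := by
    rw [groupConv_convPower, add_comm, powDiff_add, Module.End.mul_apply]
  rw [groupConv_localKernel, ← hdiff, hcomm, sub_mul, one_mul, groupConv_sub, add_sub_cancel]

/-- The part of the kernel `localKernel F φ σ` which is not supported near the support of `φ`,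
up to sign. -/
def localTail (F φ : G → ℝ) (σ : ℕ) : G → ℝ :=
  groupConv ((1 - autocorr φ) * convPower F 2) (autocorr φ * convPower F (2 * σ))

theorem localKernel_eq_sub_localTail (F φ : G → ℝ) (σ : ℕ) :
    localKernel F φ σ = autocorr φ * convPower F (2 * σ)
      - groupConv (autocorr φ * convPower F 2) (autocorr φ * convPower F (2 * σ))
      - localTail F φ σ := by
  rw [localTail, sub_mul, one_mul, groupConv_sub, localKernel]; abel

theorem groupConv_localKernel_eq_of_notMem {F φ U : G → ℝ} (hφ : φ ≠ 0) {S : Set G}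
    (hS : support φ - support φ + (support φ - support φ) + support U ⊆ S) (σ : ℕ) {z : G}
    (hz : z ∉ S) :
    groupConv (localKernel F φ σ) U z = - groupConv (localTail F φ σ) U z := by
  set D := support φ - support φ
  obtain ⟨v, hv⟩ := Function.support_nonempty_iff.2 hφ
  have hD : D ⊆ D + D := Set.subset_add_left D ⟨v, hv, v, hv, sub_self v⟩
  have hμ (s : ℕ) : support (autocorr φ * convPower F s) ⊆ D :=
    (support_mul_subset_left _ _).trans (support_autocorr_subset φ)
  have hzero {a : G → ℝ} (ha : support a ⊆ D + D) : groupConv a U z = 0 :=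
    notMem_support.1 fun h ↦ hz <| hS <|
      Set.add_subset_add_right ha (support_groupConv_subset a U h)
  rw [localKernel_eq_sub_localTail, groupConv_sub, groupConv_sub, Pi.sub_apply, Pi.sub_apply,
    hzero ((hμ _).trans hD), hzero ((support_groupConv_subset _ _).trans
      (Set.add_subset_add (hμ _) (hμ _))), sub_zero, zero_sub]

namespace IsSymmProb

variable {F φ : G → ℝ}

theorem l2norm_groupConv_localKernel_le (hF : IsSymmProb F) (hφ : l2norm φ = 1) (σ : ℕ)
    (g : G → ℝ) :
    l2norm (groupConv (localKernel F φ σ) g)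
      ≤ (2 / (σ + 1) + 2 * lostMass (convPower F 2) φ) * l2norm g := by
  rw [groupConv_localKernel]; exact hF.l2norm_groupConv_autocorr_mul_le hφ σ g

theorem localTail_nonneg (hF : IsSymmProb F) (hφ0 : 0 ≤ φ) (hφ : l2norm φ = 1) (σ : ℕ) :
    0 ≤ localTail F φ σ :=
  groupConv_nonneg
    (fun y ↦ mul_nonneg (sub_nonneg.2 (autocorr_le_one hφ y)) ((hF.convPower 2).nonneg y))
    (fun y ↦ mul_nonneg (autocorr_nonneg hφ0 y) ((hF.convPower _).nonneg y))

theorem sum_localTail_le (hF : IsSymmProb F) (hφ : l2norm φ = 1) (σ : ℕ) :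
    ∑ x, localTail F φ σ x ≤ lostMass (convPower F 2) φ := by
  have hP (s : ℕ) := hF.convPower s
  have hmass : ∑ x, (autocorr φ * convPower F (2 * σ)) x ≤ 1 := by
    rw [← (hP (2 * σ)).sum_eq_one]
    exact Finset.sum_le_sum fun y _ ↦ mul_le_of_le_one_left ((hP _).nonneg y) (autocorr_le_one hφ y)
  have hlost : ∑ x, ((1 - autocorr φ) * convPower F 2) x = lostMass (convPower F 2) φ :=
    Finset.sum_congr rfl fun y _ ↦ mul_comm _ _
  rw [localTail, sum_groupConv, hlost]
  exact mul_le_of_le_one_right ((hP 2).lostMass_nonneg hφ) hmass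

theorem abs_groupConv_localKernel_le (hF : IsSymmProb F) (hφ0 : 0 ≤ φ) (hφ : l2norm φ = 1)
    {U : G → ℝ} (hU0 : 0 ≤ U) (hU1 : ∑ y, U y = 1) {S : Finset G}
    (hS : support φ - support φ + (support φ - support φ) + support U ⊆ ↑S) (σ n : ℕ)
    {g : G → ℝ} {η Q : ℝ} (hη : ∀ w, (groupConv F ^ n) |g| w ≤ η)
    (hQ : ∀ x, ∑ z ∈ S, |g| (x - z) ≤ Q) (w : G) :
    |groupConv (groupConv (localKernel F φ σ) U) ((groupConv F ^ n) g) w|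
      ≤ (2 / (σ + 1) + 2 * lostMass (convPower F 2) φ) * l2norm U * √(η * Q)
        + lostMass (convPower F 2) φ * η := by
  have hb : 0 ≤ (groupConv F ^ n) |g| := hF.walkOp_pow_nonneg _ n (abs_nonneg g)
  have hη0 : 0 ≤ η := (hb w).trans (hη w)
  have hφ_ne : φ ≠ 0 := by rintro rfl; rw [l2norm_zero] at hφ; exact zero_ne_one hφ
  have hg : |(groupConv F ^ n) g| ≤ (groupConv F ^ n) |g| := by
    rw [← groupConv_convPower]
    exact abs_walkOp_le _ (hF.convPower n).nonneg g
  have htail : 0 ≤ groupConv (localTail F φ σ) U :=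
    groupConv_nonneg (hF.localTail_nonneg hφ0 hφ σ) hU0
  refine (abs_groupConv_le _ _ w).trans ((Finset.sum_le_sum fun z _ ↦
    mul_le_mul_of_nonneg_left (hg (w - z)) (abs_nonneg _)).trans ?_)
  refine (sum_abs_mul_le_of_off_le hη0 (fun z ↦ hb (w - z)) (fun z ↦ hη (w - z))
    (hF.sum_walkOp_pow_sub_le _ n hQ w) htail fun z hz ↦ ?_).trans ?_
  · rw [groupConv_localKernel_eq_of_notMem hφ_ne hS σ hz, abs_neg, abs_of_nonneg (htail z)]
  · rw [sum_groupConv, hU1, mul_one]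
    exact add_le_add (mul_le_mul_of_nonneg_right (hF.l2norm_groupConv_localKernel_le hφ σ U)
      (Real.sqrt_nonneg _)) (mul_le_mul_of_nonneg_right (hF.sum_localTail_le hφ σ) hη0)

theorem abs_powDiff_groupConv_le (hF : IsSymmProb F) (hφ0 : 0 ≤ φ) (hφ : l2norm φ = 1)
    {U : G → ℝ} (hU0 : 0 ≤ U) (hU1 : ∑ y, U y = 1) {S : Finset G}
    (hS : support φ - support φ + (support φ - support φ) + support U ⊆ ↑S) (σ n : ℕ)
    {g : G → ℝ} {η Q M : ℝ} (hη : ∀ w, (groupConv F ^ n) |g| w ≤ η)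
    (hQ : ∀ x, ∑ z ∈ S, |g| (x - z) ≤ Q)
    (hM : ∀ w, |powDiff (AddMonoidHom.id G) F n (groupConv U g) w| ≤ M) (w : G) :
    |powDiff (AddMonoidHom.id G) F (n + 2 * σ) (groupConv U g) w|
      ≤ (2 / (σ + 1) + 2 * lostMass (convPower F 2) φ) * l2norm U * √(η * Q)
        + lostMass (convPower F 2) φ * η + σ * lostMass (convPower F 2) φ * M := by
  have hcomm : (groupConv F ^ n) (groupConv U g) = groupConv U ((groupConv F ^ n) g) :=
    LinearMap.congr_fun ((walkOp_commute _ _ F U).pow_left n).eq g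
  rw [powDiff_eq_localKernel_add F φ, hcomm, ← groupConv_assoc, Pi.add_apply]
  refine (abs_add_le _ _).trans (add_le_add
    (hF.abs_groupConv_localKernel_le hφ0 hφ hU0 hU1 hS σ n hη hQ w) ?_)
  have hdef : 0 ≤ (1 - autocorr φ) * convPower F (2 * σ) := fun y ↦
    mul_nonneg (sub_nonneg.2 (autocorr_le_one hφ y)) ((hF.convPower _).nonneg y)
  calc _ ≤ ∑ y, ((1 - autocorr φ) * convPower F (2 * σ)) y * M :=
        (abs_walkOp_le _ hdef _ w).trans (Finset.sum_le_sum fun y _ ↦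
          mul_le_mul_of_nonneg_left (hM _) (hdef y))
    _ = lostMass (convPower F (2 * σ)) φ * M := by
        rw [← Finset.sum_mul]
        exact congrArg (· * M) (Finset.sum_congr rfl fun y _ ↦ mul_comm _ _)
    _ ≤ _ := mul_le_mul_of_nonneg_right (hF.lostMass_convPower_le hφ σ)
        ((abs_nonneg _).trans (hM w))

end IsSymmProb

end LocalKernel

section Arc

variable {M : ℕ}

/-- The indicator function of the arc `{0, …, n - 1}` of `ZMod M`, counted with multiplicity. -/
def arc (n : ℕ) : ZMod M → ℝ := ∑ i ∈ Finset.range n, Pi.single (i : ZMod M) 1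

theorem arc_zero : (arc 0 : ZMod M → ℝ) = 0 := Finset.sum_range_zero _

theorem arc_one : (arc 1 : ZMod M → ℝ) = Pi.single 0 1 := by simp [arc]

theorem arc_nonneg (n : ℕ) : (0 : ZMod M → ℝ) ≤ arc n :=
  Finset.sum_nonneg fun _ _ ↦ Pi.single_nonneg.2 zero_le_one

theorem shift_neg_single (x y : ZMod M) :
    shift (-y) (Pi.single x (1 : ℝ)) = Pi.single (y + x) 1 := by
  funext v; simp only [shift, Pi.single_apply, ← sub_eq_add_neg, sub_eq_iff_eq_add']

theorem arc_add (n t : ℕ) : (arc (n + t) : ZMod M → ℝ) = arc n + shift (-(n : ZMod M)) (arc t) := by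
  induction t with
  | zero => rw [add_zero, arc_zero]; exact (add_zero _).symm
  | succ t ih =>
    have hsucc (k : ℕ) : (arc (k + 1) : ZMod M → ℝ) = arc k + Pi.single (k : ZMod M) 1 :=
      Finset.sum_range_succ _ _
    rw [← add_assoc, hsucc, ih, hsucc, add_assoc, Nat.cast_add, ← shift_neg_single]
    rfl

theorem arc_mono : Monotone (arc : ℕ → ZMod M → ℝ) :=
  monotone_nat_of_le_succ fun n ↦ by
    rw [arc_add]; exact le_add_of_nonneg_right fun v ↦ arc_nonneg 1 (v + _)

theorem arc_sub_shift (n t : ℕ) : (arc n : ZMod M → ℝ) - shift (-(t : ZMod M)) (arc n)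
    = arc t - shift (-(n : ZMod M)) (arc t) := by
  rw [sub_eq_sub_iff_add_eq_add, ← arc_add, ← arc_add, add_comm]

theorem arc_mul (n q : ℕ) : (arc (n * q) : ZMod M → ℝ)
    = ∑ r ∈ Finset.range q, shift (-((n * r : ℕ) : ZMod M)) (arc n) := by
  induction q with
  | zero => rw [mul_zero, arc_zero, Finset.sum_range_zero]
  | succ q ih => rw [mul_add_one, arc_add, ih, Finset.sum_range_succ]

variable [NeZero M]

theorem arc_apply {n : ℕ} (hn : n ≤ M) (v : ZMod M) :
    arc n v = if v.val < n then 1 else 0 := by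
  have hval {i : ℕ} (hi : i ∈ Finset.range n) : v = (i : ZMod M) ↔ v.val = i :=
    ⟨fun h ↦ by rw [h, ZMod.val_cast_of_lt ((Finset.mem_range.1 hi).trans_le hn)],
      fun h ↦ by rw [← h, ZMod.natCast_zmod_val]⟩
  rw [arc, Finset.sum_apply]
  simp only [Pi.single_apply]
  rw [Finset.sum_congr rfl fun i hi ↦ if_congr (hval hi) rfl rfl, Finset.sum_ite_eq]
  simp only [Finset.mem_range]

theorem arc_le_one {n : ℕ} (hn : n ≤ M) (v : ZMod M) : arc n v ≤ 1 := by
  rw [arc_apply hn]; split_ifs <;> norm_num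

theorem arc_dotProduct (n : ℕ) (f : ZMod M → ℝ) : arc n ⬝ᵥ f = ∑ i ∈ Finset.range n, f i := by
  simp only [arc, sum_dotProduct, single_one_dotProduct]

theorem sum_arc (n : ℕ) : ∑ v : ZMod M, arc n v = n := by
  simpa [dotProduct] using arc_dotProduct (M := M) n 1

theorem l2norm_walkOp_pow_arc_mono {G : Type*} [AddCommGroup G] [Fintype G] {F : G → ℝ}
    (hF : IsSymmProb F) (π : G →+ ZMod M) (N : ℕ) :
    Monotone fun n ↦ l2norm ((walkOp π F ^ N) (arc n)) := fun n n' h ↦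
  l2norm_le_l2norm fun v ↦ by
    rw [abs_of_nonneg (hF.walkOp_pow_nonneg π N (arc_nonneg n) v)]
    exact hF.walkOp_pow_mono π N (arc_mono h) v

/- Translating `arc n` by `t` only changes its two ends, so the difference is that of two translates
of `arc t`. -/
theorem shiftDist_walkOp_pow_arc_le {G : Type*} [AddCommGroup G] [Fintype G] (F : G → ℝ)
    (π : G →+ ZMod M) (N n t : ℕ) :
    shiftDist ((walkOp π F ^ N) (arc n)) t ≤ 2 * l2norm ((walkOp π F ^ N) (arc t)) := by
  rw [← map_neg_eq_map, shiftDist_apply, ← walkOp_pow_shift, ← map_sub, arc_sub_shift, map_sub,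
    walkOp_pow_shift]
  refine (l2norm_sub_le_add _ _).trans_eq ?_
  rw [l2norm_shift, two_mul]

end Arc

section Dyadic

variable {M : ℕ}

/-- The uniform distribution on the arc `{0, …, 2 ^ j - 1}` of `ZMod M`. -/
def dyadicUnif (j : ℕ) : ZMod M → ℝ := (2 ^ j : ℝ)⁻¹ • arc (2 ^ j)

theorem dyadicUnif_nonneg (j : ℕ) : (0 : ZMod M → ℝ) ≤ dyadicUnif j :=
  smul_nonneg (by positivity) (arc_nonneg _)

theorem arc_two_pow (j : ℕ) : (arc (2 ^ j) : ZMod M → ℝ) = (2 ^ j : ℝ) • dyadicUnif j := by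
  rw [dyadicUnif, smul_inv_smul₀ (by positivity)]

theorem dyadicUnif_zero : (dyadicUnif 0 : ZMod M → ℝ) = Pi.single 0 1 := by
  rw [dyadicUnif, pow_zero, pow_zero, inv_one, one_smul, arc_one]

theorem dyadicUnif_succ (j : ℕ) : (dyadicUnif (j + 1) : ZMod M → ℝ)
    = (2⁻¹ : ℝ) • (dyadicUnif j + shift (-((2 ^ j : ℕ) : ZMod M)) (dyadicUnif j)) := by
  have htwo : 2 ^ (j + 1) = 2 ^ j + 2 ^ j := by omega
  rw [dyadicUnif, dyadicUnif, htwo, arc_add]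
  funext v
  simp only [shift, Pi.smul_apply, Pi.add_apply, smul_eq_mul, pow_succ, mul_inv]
  ring

theorem walkOp_pow_dyadicUnif_succ {G : Type*} [AddCommGroup G] [Fintype G] (π : G →+ ZMod M)
    (F : G → ℝ) (N j : ℕ) :
    ∃ x : ZMod M, (walkOp π F ^ N) (dyadicUnif (j + 1)) = (2⁻¹ : ℝ) •
      ((walkOp π F ^ N) (dyadicUnif j) + shift x ((walkOp π F ^ N) (dyadicUnif j))) :=
  ⟨_, by rw [dyadicUnif_succ, map_smul, map_add, walkOp_pow_shift]⟩

variable [NeZero M]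

theorem sum_dyadicUnif (j : ℕ) : ∑ v : ZMod M, dyadicUnif j v = 1 := by
  simp only [dyadicUnif, Pi.smul_apply, smul_eq_mul, ← Finset.mul_sum, sum_arc]
  push_cast
  exact inv_mul_cancel₀ (by positivity)

theorem l2norm_sq_dyadicUnif_le {j : ℕ} (hj : 2 ^ j ≤ M) :
    l2norm (dyadicUnif j : ZMod M → ℝ) ^ 2 ≤ (2 ^ j : ℝ)⁻¹ := by
  have hle (v : ZMod M) : dyadicUnif j v ≤ (2 ^ j : ℝ)⁻¹ :=
    mul_le_of_le_one_right (by positivity) (arc_le_one hj v)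
  calc l2norm (dyadicUnif j : ZMod M → ℝ) ^ 2
      ≤ ∑ v : ZMod M, dyadicUnif j v * (2 ^ j : ℝ)⁻¹ := by
        rw [l2norm_sq]
        exact Finset.sum_le_sum fun v _ ↦ mul_le_mul_of_nonneg_left (hle v) (dyadicUnif_nonneg j v)
    _ = (2 ^ j : ℝ)⁻¹ := by rw [← Finset.sum_mul, sum_dyadicUnif, one_mul]

/-- The quantity `2 ^ j * ‖T ^ N U‖²`, where `U` is uniform on an arc of length `2 ^ j`.  Up to
constants it is the largest mass which `T ^ (2 * N)` gives to an arc of length `2 ^ j`. -/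
def dyadicConc {G : Type*} [AddCommGroup G] [Fintype G] (π : G →+ ZMod M) (F : G → ℝ)
    (N j : ℕ) : ℝ := 2 ^ j * powNormSq π F (dyadicUnif j) N

variable {G : Type*} [AddCommGroup G] [Fintype G]

theorem powNormSq_dyadicUnif_antitone (π : G →+ ZMod M) (F : G → ℝ) (N : ℕ) :
    Antitone fun j ↦ powNormSq π F (dyadicUnif j) N :=
  antitone_nat_of_succ_le fun j ↦ by
    obtain ⟨x, hx⟩ := walkOp_pow_dyadicUnif_succ π F N j
    rw [powNormSq, powNormSq, hx]
    set k := (walkOp π F ^ N) (dyadicUnif j)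
    have hcross := dotProduct_le_half_l2norm_sq k (shift x k)
    rw [l2norm_shift] at hcross
    rw [l2norm_sq_half_add_shift]
    linarith

theorem dyadicConc_succ_le (π : G →+ ZMod M) (F : G → ℝ) (N j : ℕ) :
    dyadicConc π F N (j + 1) ≤ 2 * dyadicConc π F N j := by
  have h := powNormSq_dyadicUnif_antitone π F N j.le_succ
  rw [dyadicConc, dyadicConc, pow_succ', mul_assoc]
  gcongr

theorem dyadicConc_le (π : G →+ ZMod M) (F : G → ℝ) (N j : ℕ) :
    dyadicConc π F N j ≤ 2 ^ j * dyadicConc π F N 0 := by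
  rw [dyadicConc, dyadicConc, pow_zero, one_mul]
  gcongr
  exact powNormSq_dyadicUnif_antitone π F N j.zero_le

namespace IsSymmProb

variable {F : G → ℝ}

theorem dyadicConc_mono (hF : IsSymmProb F) (π : G →+ ZMod M) (N : ℕ) :
    Monotone (dyadicConc π F N) :=
  monotone_nat_of_le_succ fun j ↦ by
    obtain ⟨x, hx⟩ := walkOp_pow_dyadicUnif_succ π F N j
    rw [dyadicConc, dyadicConc, powNormSq, powNormSq, hx]
    set k := (walkOp π F ^ N) (dyadicUnif j)
    have hk : 0 ≤ k := hF.walkOp_pow_nonneg π N (dyadicUnif_nonneg j)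
    have hcross : 0 ≤ k ⬝ᵥ shift x k := Finset.sum_nonneg fun v _ ↦ mul_nonneg (hk v) (hk _)
    rw [l2norm_sq_half_add_shift, pow_succ (2 : ℝ) j, mul_assoc]
    gcongr
    linarith

theorem one_le_dyadicConc (hF : IsSymmProb F) (π : G →+ ZMod M) (N : ℕ) {j : ℕ} (hj : M ≤ 2 ^ j) :
    1 ≤ dyadicConc π F N j := by
  have hsum : (1 : ZMod M → ℝ) ⬝ᵥ (walkOp π F ^ N) (dyadicUnif j) = 1 := by
    rw [← hF.walkOp_pow_dotProduct, hF.walkOp_pow_one, one_dotProduct, sum_dyadicUnif]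
  have hcs := dotProduct_le_l2norm_mul 1 ((walkOp π F ^ N) (dyadicUnif j))
  rw [hsum] at hcs
  have hone : l2norm (1 : ZMod M → ℝ) ^ 2 = M := by
    rw [l2norm_sq, one_dotProduct_one, ZMod.card]
  calc (1 : ℝ) ≤ (l2norm (1 : ZMod M → ℝ) * l2norm ((walkOp π F ^ N) (dyadicUnif j))) ^ 2 :=
        one_le_pow₀ hcs
    _ = M * powNormSq π F (dyadicUnif j) N := by rw [mul_pow, hone, powNormSq]
    _ ≤ dyadicConc π F N j := by
        rw [dyadicConc]
        gcongr
        · exact powNormSq_nonneg _ _ _ _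
        · exact_mod_cast hj

end IsSymmProb

end Dyadic

section Bump

variable {A : Type*} [AddCommGroup A]

/-- The cone `x ↦ max (r - p x) 0`, a Lipschitz bump supported on the ball of radius `r`. -/
def coneBump (p : AddGroupSeminorm A) (r : ℝ) (x : A) : ℝ := max (r - p x) 0

theorem coneBump_nonneg (p : AddGroupSeminorm A) (r : ℝ) : 0 ≤ coneBump p r :=
  fun _ ↦ le_max_right _ _

theorem abs_coneBump_sub_le (p : AddGroupSeminorm A) (r : ℝ) (v x : A) :
    |coneBump p r v - coneBump p r (v + x)| ≤ p x := by
  refine (abs_max_sub_max_le_abs _ _ _).trans ?_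
  have hadd := map_add_le_add p v x
  have hsub := map_sub_le_add p (v + x) x
  rw [add_sub_cancel_right] at hsub
  rw [abs_le]
  constructor <;> linarith

variable [Fintype A]

open Classical in
/-- The closed ball of radius `r` around `0` for a seminorm on a finite group. -/
def seminormBall (p : AddGroupSeminorm A) (r : ℝ) : Finset A := {x | p x ≤ r}

theorem mem_seminormBall {p : AddGroupSeminorm A} {r : ℝ} {x : A} :
    x ∈ seminormBall p r ↔ p x ≤ r := by
  simp only [seminormBall, Finset.mem_filter_univ]

theorem coneBump_eq_zero {p : AddGroupSeminorm A} {r : ℝ} {x : A} (h : x ∉ seminormBall p r) :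
    coneBump p r x = 0 :=
  max_eq_right (by linarith [not_le.1 (mem_seminormBall.not.1 h)])

theorem shiftDist_coneBump_sq_le (p : AddGroupSeminorm A) (r : ℝ) (x : A) :
    shiftDist (coneBump p r) x ^ 2 ≤ 2 * (seminormBall p r).card * p x ^ 2 := by
  classical
  set B := seminormBall p r
  let ind : A → ℝ := fun v ↦ if v ∈ B then 1 else 0
  have hsum : ∑ v, ind v = B.card := by simp [ind]
  have hsumx : ∑ v, ind (v + x) = B.card := (Equiv.sum_comp (Equiv.addRight x) ind).trans hsum
  have hpt (v : A) :
      (coneBump p r v - coneBump p r (v + x)) ^ 2 ≤ (ind v + ind (v + x)) * p x ^ 2 := by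
    have hlip := pow_le_pow_left₀ (abs_nonneg _) (abs_coneBump_sub_le p r v x) 2
    rw [sq_abs] at hlip
    by_cases hv : v ∈ B <;> by_cases hvx : v + x ∈ B <;>
      simp only [ind, hv, hvx, if_true, if_false]
    · linarith [sq_nonneg (p x)]
    · linarith
    · linarith
    · rw [coneBump_eq_zero hv, coneBump_eq_zero hvx]; simp
  calc shiftDist (coneBump p r) x ^ 2
      = ∑ v, (coneBump p r v - coneBump p r (v + x)) ^ 2 := by
        rw [shiftDist_apply, l2norm_sq]
        exact Finset.sum_congr rfl fun v _ ↦ (sq _).symm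
    _ ≤ ∑ v, (ind v + ind (v + x)) * p x ^ 2 := Finset.sum_le_sum fun v _ ↦ hpt v
    _ = 2 * B.card * p x ^ 2 := by
        rw [← Finset.sum_mul, Finset.sum_add_distrib, hsum, hsumx, two_mul]

theorem card_mul_sq_le_l2norm_coneBump_sq (p : AddGroupSeminorm A) {ε : ℝ} (hε : 0 ≤ ε) :
    (seminormBall p ε).card * ε ^ 2 ≤ l2norm (coneBump p (2 * ε)) ^ 2 := by
  rw [l2norm_sq, ← nsmul_eq_mul]
  refine (Finset.card_nsmul_le_sum _ _ _ fun v hv ↦ ?_).trans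
    (Finset.sum_le_univ_sum_of_nonneg fun v ↦ mul_self_nonneg (coneBump p (2 * ε) v))
  have hle : ε ≤ coneBump p (2 * ε) v :=
    le_max_of_le_left (by linarith [mem_seminormBall.1 hv])
  rw [sq]
  exact mul_self_le_mul_self hε hle

theorem exists_bump_of_card_le (p : AddGroupSeminorm A) {ε R : ℝ} (hε : 0 < ε)
    (hR : ((seminormBall p (2 * ε)).card : ℝ) ≤ R * (seminormBall p ε).card) :
    ∃ φ : A → ℝ, 0 ≤ φ ∧ l2norm φ = 1 ∧ (∀ v, φ v ≠ 0 → p v ≤ 2 * ε) ∧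
      ∀ x, 1 - autocorr φ x ≤ R * (p x / ε) ^ 2 := by
  set ψ := coneBump p (2 * ε)
  have hball : (0 : ℝ) < (seminormBall p ε).card := by
    have hmem : (0 : A) ∈ seminormBall p ε := mem_seminormBall.2 ((map_zero p).trans_le hε.le)
    exact_mod_cast Finset.card_pos.2 ⟨0, hmem⟩
  have hψ := card_mul_sq_le_l2norm_coneBump_sq p hε.le
  have hψsq : 0 < l2norm ψ ^ 2 := lt_of_lt_of_le (by positivity) hψ
  have hψpos : 0 < l2norm ψ := (l2norm_nonneg ψ).lt_of_ne' (sq_pos_iff.1 hψsq)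
  have hone : l2norm ((l2norm ψ)⁻¹ • ψ) = 1 := by
    rw [l2norm_smul, abs_of_pos (inv_pos.2 hψpos), inv_mul_cancel₀ hψpos.ne']
  refine ⟨(l2norm ψ)⁻¹ • ψ, smul_nonneg (inv_nonneg.2 hψpos.le) (coneBump_nonneg p _), hone,
    fun v hv ↦ ?_, fun x ↦ ?_⟩
  · by_contra hpv
    exact hv (mul_eq_zero_of_right _ (coneBump_eq_zero (mem_seminormBall.not.2 hpv)))
  · rw [one_sub_autocorr hone, shiftDist_smul, mul_pow, sq_abs, inv_pow]
    calc (l2norm ψ ^ 2)⁻¹ * shiftDist ψ x ^ 2 / 2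
        ≤ (l2norm ψ ^ 2)⁻¹ * (2 * (R * (seminormBall p ε).card) * p x ^ 2) / 2 := by
          gcongr
          exact (shiftDist_coneBump_sq_le p _ x).trans (by gcongr)
      _ = (l2norm ψ ^ 2)⁻¹ * ((seminormBall p ε).card * ε ^ 2) * (R * (p x / ε) ^ 2) := by
          field_simp
      _ ≤ (l2norm ψ ^ 2)⁻¹ * l2norm ψ ^ 2 * (R * (p x / ε) ^ 2) := by
          have hR0 : 0 ≤ R := by
            by_contra hneg
            have := mul_neg_of_neg_of_pos (not_le.1 hneg) hball
            linarith [Nat.cast_nonneg (α := ℝ) (seminormBall p (2 * ε)).card]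
          gcongr
      _ = R * (p x / ε) ^ 2 := by rw [inv_mul_cancel₀ hψsq.ne', one_mul]

namespace IsSymmProb

variable {G : Type*} [AddCommGroup G] [Fintype G] {F : G → ℝ}

theorem sum_autocorr_walkOp_pow_mul_le (hF : IsSymmProb F) (π : G →+ A) (N : ℕ) {U b : A → ℝ}
    {η : ℝ} (hU0 : 0 ≤ U) (hU1 : ∑ v, U v = 1) (hη : ∀ w, (walkOp π F ^ (2 * N)) b w ≤ η) (x : A) :
    ∑ z, autocorr ((walkOp π F ^ N) U) z * b (x - z) ≤ η := by
  set V := (walkOp π F ^ (2 * N)) U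
  have hauto (z : A) : autocorr ((walkOp π F ^ N) U) z = ∑ v, U v * V (v - z) := by
    rw [← autocorr_neg, autocorr, ← walkOp_pow_shift, hF.walkOp_pow_dotProduct,
      ← Module.End.mul_apply, ← pow_add, ← two_mul, walkOp_pow_shift]
    simp only [dotProduct, shift, sub_eq_add_neg, V]
  have hinner (v : A) : ∑ z, V (v - z) * b (x - z) ≤ η := by
    calc ∑ z, V (v - z) * b (x - z) = b ⬝ᵥ shift (v - x) V := by
          rw [← Equiv.sum_comp (Equiv.subLeft x), dotProduct_comm]
          refine Finset.sum_congr rfl fun u _ ↦ ?_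
          simp only [Equiv.subLeft_apply, sub_sub_cancel, shift]
          congr 2; abel
      _ = (walkOp π F ^ (2 * N)) b ⬝ᵥ shift (v - x) U := by
          rw [hF.walkOp_pow_dotProduct, walkOp_pow_shift]
      _ ≤ ∑ u, η * shift (v - x) U u :=
          Finset.sum_le_sum fun u _ ↦ mul_le_mul_of_nonneg_right (hη u) (hU0 _)
      _ = η := by
          rw [← Finset.mul_sum]
          exact (congrArg (η * ·) ((Equiv.sum_comp (Equiv.addRight (v - x)) U).trans hU1)).trans
            (mul_one η)
  calc ∑ z, autocorr ((walkOp π F ^ N) U) z * b (x - z)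
      = ∑ v, U v * ∑ z, V (v - z) * b (x - z) := by
        simp only [hauto, Finset.sum_mul, Finset.mul_sum, mul_assoc]
        exact Finset.sum_comm
    _ ≤ ∑ v, U v * η := Finset.sum_le_sum fun v _ ↦ mul_le_mul_of_nonneg_left (hinner v) (hU0 v)
    _ = η := by rw [← Finset.sum_mul, hU1, one_mul]

/- On the ball in question the autocorrelation of `T ^ N U` is at least half of its value at `0`. -/
theorem sum_seminormBall_le (hF : IsSymmProb F) (π : G →+ A) (N : ℕ) {U b : A → ℝ} {η : ℝ}
    (hU0 : 0 ≤ U) (hU1 : ∑ v, U v = 1) (hb : 0 ≤ b)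
    (hη : ∀ w, (walkOp π F ^ (2 * N)) b w ≤ η) (x : A) :
    powNormSq π F U N * ∑ z ∈ seminormBall (shiftDist ((walkOp π F ^ N) U))
      (l2norm ((walkOp π F ^ N) U)), b (x - z) ≤ 2 * η := by
  refine le_trans ?_ (mul_le_mul_of_nonneg_left
    (hF.sum_autocorr_walkOp_pow_mul_le π N hU0 hU1 hη x) zero_le_two)
  rw [powNormSq, Finset.mul_sum, Finset.mul_sum]
  set k := (walkOp π F ^ N) U
  have hk : 0 ≤ k := hF.walkOp_pow_nonneg π N hU0
  refine (Finset.sum_le_sum fun z hz ↦ ?_).trans (Finset.sum_le_univ_sum_of_nonneg fun z ↦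
    mul_nonneg zero_le_two (mul_nonneg (autocorr_nonneg hk z) (hb _)))
  have hz2 := pow_le_pow_left₀ (apply_nonneg _ z) (mem_seminormBall.1 hz) 2
  rw [shiftDist_sq] at hz2
  rw [← mul_assoc]
  exact mul_le_mul_of_nonneg_right (by rw [autocorr]; linarith) (hb _)

end IsSymmProb

end Bump

section Localizer

open Function Pointwise

variable {M : ℕ} [NeZero M] {G : Type*} [AddCommGroup G] [Fintype G] {F : G → ℝ}

theorem shiftDist_walkOp_pow_dyadicUnif_le (hF : IsSymmProb F) (π : G →+ ZMod M) (N : ℕ)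
    {j t : ℕ} (ht : t ≤ 2 ^ j) (s : ℕ) :
    shiftDist ((walkOp π F ^ N) (dyadicUnif (j + 2 * s))) t
      ≤ 2 / 2 ^ s * l2norm ((walkOp π F ^ N) (dyadicUnif (j + 2 * s))) := by
  set κ := l2norm ((walkOp π F ^ N) (dyadicUnif (j + 2 * s)))
  set l := l2norm ((walkOp π F ^ N) (dyadicUnif j))
  have hl : l ≤ 2 ^ s * κ := by
    have hconc := hF.dyadicConc_mono π N (j.le_add_right (2 * s))
    rw [dyadicConc, dyadicConc, powNormSq, powNormSq, pow_add, mul_assoc, pow_mul',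
      ← mul_pow (_ ^ s)] at hconc
    exact (sq_le_sq₀ (l2norm_nonneg _) (mul_nonneg (by positivity) (l2norm_nonneg _))).1
      (le_of_mul_le_mul_left hconc (by positivity))
  have harc : l2norm ((walkOp π F ^ N) (arc t)) ≤ 2 ^ j * l := by
    refine (l2norm_walkOp_pow_arc_mono hF π N ht).trans_eq ?_
    simp only [arc_two_pow, map_smul, l2norm_smul, abs_of_pos (pow_pos (zero_lt_two' ℝ) j), l]
  calc shiftDist ((walkOp π F ^ N) (dyadicUnif (j + 2 * s))) t
      ≤ (2 ^ (j + 2 * s) : ℝ)⁻¹ * (2 * l2norm ((walkOp π F ^ N) (arc t))) := by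
        rw [dyadicUnif, map_smul, shiftDist_smul, abs_of_pos (by positivity)]
        gcongr
        exact shiftDist_walkOp_pow_arc_le F π N _ t
    _ ≤ (2 ^ (j + 2 * s) : ℝ)⁻¹ * (2 * (2 ^ j * (2 ^ s * κ))) := by
        gcongr
        exact harc.trans (by gcongr)
    _ = 2 / 2 ^ s * κ := by rw [pow_add, pow_mul']; field_simp

theorem le_card_seminormBall {n : ℕ} (hn : n ≤ M) {p : AddGroupSeminorm (ZMod M)} {r : ℝ}
    (h : ∀ t : ℕ, t < n → p t ≤ r) : n ≤ (seminormBall p r).card := by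
  rw [← Finset.card_range n]
  exact Finset.card_le_card_of_injOn (↑) (fun t ht ↦ mem_seminormBall.2 (h t (by simpa using ht)))
    ((CharP.natCast_injOn_Iio (ZMod M) M).mono fun t ht ↦ by
      exact (Finset.mem_range.1 ht).trans_le hn)

theorem val_lt_of_mem_support_dyadicUnif {j : ℕ} (hj : 2 ^ j ≤ M) {u : ZMod M}
    (hu : u ∈ support (dyadicUnif j : ZMod M → ℝ)) : u.val < 2 ^ j := by
  by_contra hlt
  exact hu (mul_eq_zero_of_right _ (by rw [arc_apply hj, if_neg hlt]))

/-- A unit vector `φ` and a finite set `S` localising, at the scale `2 ^ j` at which the walk gives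
mass about `2⁻¹ ^ i` to arcs, a random walk on `G` in the direction `π`: little mass of two steps is
lost under the autocorrelation of `φ`, while `S`, which contains the spread of `φ`, meets every
function not concentrated by `2 * N` steps in a small sum. -/
structure IsLocalizer (π : G →+ ZMod M) (F : G → ℝ) (N i j : ℕ) (φ : ZMod M → ℝ)
    (S : Finset (ZMod M)) : Prop where
  nonneg : 0 ≤ φ
  l2norm_eq_one : l2norm φ = 1
  sum_one_sub_autocorr_le :
    ∑ y, convPower F 2 y * (1 - autocorr φ (π y)) ≤ 819200000 * 1.21 ^ i / N
  support_subset :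
    support φ - support φ + (support φ - support φ) + support (dyadicUnif j : ZMod M → ℝ) ⊆ ↑S
  sum_le {b : ZMod M → ℝ} {η : ℝ} (hb : 0 ≤ b) (hη : ∀ w, (walkOp π F ^ (2 * N)) b w ≤ η)
    (x : ZMod M) : ∑ z ∈ S, b (x - z) ≤ 2 ^ 26 * 2 ^ i * 2 ^ j * η

theorem map_sub_add_sub_add_le {E : Type*} [AddCommGroup E] (p : AddGroupSeminorm E)
    (v v' w w' u : E) : p (v - v' + (w - w') + u) ≤ p v + p v' + (p w + p w') + p u :=
  (map_add_le_add p _ _).trans <| add_le_add_left ((map_add_le_add p _ _).trans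
    (add_le_add (map_sub_le_add p _ _) (map_sub_le_add p _ _))) _

namespace IsSymmProb

theorem one_le_mul_powNormSq_dyadicUnif (hF : IsSymmProb F) (π : G →+ ZMod M) {N i j : ℕ}
    (h : (1 / 2 : ℝ) ^ (i + 1) ≤ dyadicConc π F N j) (s : ℕ) :
    1 ≤ 2 ^ (s + 1) * 2 ^ i * 2 ^ j * powNormSq π F (dyadicUnif (j + s)) N := by
  have hs := h.trans (hF.dyadicConc_mono π N (j.le_add_right s))
  rw [dyadicConc, one_div, inv_pow, inv_le_iff_one_le_mul₀' (by positivity)] at hs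
  refine hs.trans_eq ?_
  ring

theorem powNormSq_dyadicUnif_sub_succ_le (hF : IsSymmProb F) (π : G →+ ZMod M) {N i j : ℕ}
    (hN : N ≠ 0) (hj : 2 ^ j ≤ M) (h : (1 / 2 : ℝ) ^ (i + 1) ≤ dyadicConc π F N j) :
    powNormSq π F (dyadicUnif (j + 24)) N - powNormSq π F (dyadicUnif (j + 24)) (N + 1)
      ≤ 25 * 1.1 ^ i / N * powNormSq π F (dyadicUnif (j + 24)) N := by
  have hκ := hF.one_le_mul_powNormSq_dyadicUnif π h 24
  set α := powNormSq π F (dyadicUnif (j + 24))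
  have hexp : (2 : ℝ) ^ (i + 25) ≤ Real.exp (i + 25 : ℕ) := by
    rw [← Real.exp_one_pow]
    gcongr
    linarith [Real.add_one_le_exp (1 : ℝ)]
  have hratio : α 0 ≤ Real.exp (i + 25 : ℕ) * α N := by
    calc α 0 ≤ powNormSq π F (dyadicUnif j) 0 :=
          powNormSq_dyadicUnif_antitone π F 0 (j.le_add_right 24)
      _ ≤ (2 ^ j : ℝ)⁻¹ * 1 := by rw [mul_one]; exact l2norm_sq_dyadicUnif_le hj
      _ ≤ (2 ^ j : ℝ)⁻¹ * (2 ^ (24 + 1) * 2 ^ i * 2 ^ j * α N) := by gcongr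
      _ = 2 ^ (i + 25) * α N := by field_simp; ring
      _ ≤ Real.exp (i + 25 : ℕ) * α N := by gcongr; exact powNormSq_nonneg _ _ _ _
  have hbern : ((i + 25 : ℕ) : ℝ) ≤ 25 * 1.1 ^ i := by
    have := one_add_mul_le_pow (show (-2 : ℝ) ≤ 0.1 by norm_num) i
    norm_num at this ⊢
    linarith
  refine (sub_succ_le_of_logConvex (powNormSq_nonneg π F _) (hF.powNormSq_logConvex π _) hN
    hratio).trans ?_
  gcongr
  exact powNormSq_nonneg _ _ _ _

theorem sum_seminormBall_dyadicUnif_le (hF : IsSymmProb F) (π : G →+ ZMod M) {N i j : ℕ}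
    (h : (1 / 2 : ℝ) ^ (i + 1) ≤ dyadicConc π F N j) {b : ZMod M → ℝ} {η : ℝ} (hb : 0 ≤ b)
    (hη : ∀ w, (walkOp π F ^ (2 * N)) b w ≤ η) (x : ZMod M) :
    ∑ z ∈ seminormBall (shiftDist ((walkOp π F ^ N) (dyadicUnif (j + 24))))
      (l2norm ((walkOp π F ^ N) (dyadicUnif (j + 24)))), b (x - z)
      ≤ 2 ^ 26 * 2 ^ i * 2 ^ j * η := by
  have hκ := hF.one_le_mul_powNormSq_dyadicUnif π h 24
  have hsum := hF.sum_seminormBall_le π N (dyadicUnif_nonneg (j + 24)) (sum_dyadicUnif _) hb hη x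
  set s := ∑ z ∈ seminormBall _ _, b (x - z)
  have hs : 0 ≤ s := Finset.sum_nonneg fun z _ ↦ hb _
  calc s ≤ (2 ^ (24 + 1) * 2 ^ i * 2 ^ j * powNormSq π F (dyadicUnif (j + 24)) N) * s :=
        le_mul_of_one_le_left hs hκ
    _ = 2 ^ 25 * 2 ^ i * 2 ^ j * (powNormSq π F (dyadicUnif (j + 24)) N * s) := by ring
    _ ≤ 2 ^ 25 * 2 ^ i * 2 ^ j * (2 * η) := by gcongr
    _ = 2 ^ 26 * 2 ^ i * 2 ^ j * η := by ring

/- Among the eight doublings of the radius between `κ / 1280` and `κ / 5`, one has small volume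
growth. -/
theorem exists_radius (hF : IsSymmProb F) (π : G →+ ZMod M) {N i j : ℕ} (hj : 2 ^ j ≤ M)
    (h : (1 / 2 : ℝ) ^ (i + 1) ≤ dyadicConc π F N j) {κ : ℝ} {p : AddGroupSeminorm (ZMod M)}
    (hκ : κ = l2norm ((walkOp π F ^ N) (dyadicUnif (j + 24))))
    (hp : p = shiftDist ((walkOp π F ^ N) (dyadicUnif (j + 24)))) :
    ∃ ε, κ / 1280 ≤ ε ∧ 2 * ε ≤ κ / 5 ∧
      ((seminormBall p (2 * ε)).card : ℝ) ≤ 10 * 1.1 ^ i * (seminormBall p ε).card := by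
  have hκ0 : 0 ≤ κ := hκ.symm ▸ l2norm_nonneg _
  let a : ℕ → ℝ := fun n ↦ (seminormBall p (κ / 5 / 2 ^ n)).card
  have hlow : (2 ^ j : ℝ) ≤ a 8 := by
    have hcard : 2 ^ j ≤ (seminormBall p (κ / 5 / 2 ^ 8)).card :=
      le_card_seminormBall hj fun t ht ↦ by
        have hsmall := shiftDist_walkOp_pow_dyadicUnif_le hF π N ht.le 12
        rw [← hκ, ← hp] at hsmall
        exact hsmall.trans (by linarith)
    have hcast := (Nat.cast_le (α := ℝ)).2 hcard
    rwa [Nat.cast_pow, Nat.cast_ofNat] at hcast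
  have hup : a 0 ≤ 2 ^ 26 * 2 ^ i * 2 ^ j := by
    have hvol := hF.sum_seminormBall_dyadicUnif_le π h (b := 1) (η := 1) zero_le_one
      (hF.walkOp_pow_le π (2 * N) fun _ ↦ le_rfl) 0
    simp only [Pi.one_apply, Finset.sum_const, nsmul_one, mul_one, ← hκ, ← hp] at hvol
    refine le_trans (Nat.cast_le.2 (Finset.card_le_card fun v hv ↦ ?_)) hvol
    rw [mem_seminormBall] at hv ⊢
    linarith
  obtain ⟨q, hq, hqR⟩ := exists_lt_le_mul_succ (a := a) (R := 10 * 1.1 ^ i) (by positivity)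
    (n := 8) (by norm_num) <| by
      calc a 0 ≤ 2 ^ 26 * 2 ^ i * 2 ^ j := hup
        _ ≤ 10 ^ 8 * (1.1 ^ 8) ^ i * a 8 := by gcongr <;> norm_num
        _ = (10 * 1.1 ^ i) ^ 8 * a 8 := by rw [mul_pow, ← pow_mul, ← pow_mul, mul_comm i]
  have hdouble : 2 * (κ / 5 / 2 ^ (q + 1)) = κ / 5 / 2 ^ q := by rw [pow_succ]; field_simp
  refine ⟨κ / 5 / 2 ^ (q + 1), ?_, ?_, by rw [hdouble]; exact hqR⟩
  · calc κ / 1280 = κ / 5 / 2 ^ 8 := by ring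
      _ ≤ κ / 5 / 2 ^ (q + 1) := by gcongr; exacts [one_le_two, hq]
  · rw [hdouble]
    exact div_le_self (by positivity) (one_le_pow₀ one_le_two)

theorem exists_isLocalizer (hF : IsSymmProb F) (π : G →+ ZMod M) {N i j : ℕ} (hN : N ≠ 0)
    (hj : 2 ^ j ≤ M) (h : (1 / 2 : ℝ) ^ (i + 1) ≤ dyadicConc π F N j) :
    ∃ φ S, IsLocalizer π F N i j φ S := by
  set k := (walkOp π F ^ N) (dyadicUnif (j + 24)) with hk
  set p := shiftDist k with hp
  obtain ⟨ε, hε1280, hε5, hcard⟩ := hF.exists_radius π hj h rfl hp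
  rw [← hk] at hε1280 hε5
  have hκpos : 0 < l2norm k := by
    refine (l2norm_nonneg k).lt_of_ne' fun h0 ↦ ?_
    have hκ := hF.one_le_mul_powNormSq_dyadicUnif π h 24
    rw [powNormSq, ← hk, h0] at hκ
    norm_num at hκ
  have hε : 0 < ε := lt_of_lt_of_le (by positivity) hε1280
  obtain ⟨φ, hφ0, hφ1, hφsupp, hφ⟩ := exists_bump_of_card_le p hε hcard
  refine ⟨φ, seminormBall p (l2norm k), hφ0, hφ1, ?_, ?_,
    hF.sum_seminormBall_dyadicUnif_le π h⟩
  · calc ∑ y, convPower F 2 y * (1 - autocorr φ (π y))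
        ≤ ∑ y, convPower F 2 y * (10 * 1.1 ^ i * (p (π y) / (l2norm k / 1280)) ^ 2) :=
          Finset.sum_le_sum fun y _ ↦ mul_le_mul_of_nonneg_left
            ((hφ _).trans (by gcongr)) ((hF.convPower 2).nonneg y)
      _ = 10 * 1.1 ^ i * 1280 ^ 2 / l2norm k ^ 2 * dirichletEnergy π (convPower F 2) k := by
          rw [dirichletEnergy, Finset.mul_sum]
          refine Finset.sum_congr rfl fun y _ ↦ ?_
          rw [hp]
          field_simp
      _ ≤ 10 * 1.1 ^ i * 1280 ^ 2 / l2norm k ^ 2 * (2 * (25 * 1.1 ^ i / N * l2norm k ^ 2)) := by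
          rw [hk, hF.dirichletEnergy_convPower_two]
          gcongr
          exact hF.powNormSq_dyadicUnif_sub_succ_le π hN hj h
      _ = 819200000 * (1.1 ^ i * 1.1 ^ i) / N := by field_simp; ring
      _ = 819200000 * 1.21 ^ i / N := by rw [← mul_pow]; norm_num
  · rintro _ ⟨_, ⟨_, ⟨v, hv, v', hv', rfl⟩, _, ⟨w, hw, w', hw', rfl⟩, rfl⟩, u, hu, rfl⟩
    have hu' := shiftDist_walkOp_pow_dyadicUnif_le hF π N
      (val_lt_of_mem_support_dyadicUnif hj hu).le 12
    rw [ZMod.natCast_zmod_val] at hu'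
    refine mem_seminormBall.2 ?_
    calc p (v - v' + (w - w') + u)
        ≤ p v + p v' + (p w + p w') + p u :=
          map_sub_add_sub_add_le p v v' w w' u
      _ ≤ l2norm k := by
        linarith [hφsupp v hv, hφsupp v' hv', hφsupp w hw, hφsupp w' hw']

end IsSymmProb

end Localizer

section Multiscale

variable {L : ℕ} {G : Type*} [AddCommGroup G] [Fintype G] {F : G → ℝ}

theorem abs_shift_arc_sub_shift_le {M s n : ℕ} (hs : s ≤ n) (x : ZMod M) (l : ℕ) :
    |shift x (arc l) - shift (-(s : ZMod M)) (shift x (arc l))|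
      ≤ shift x (arc n) + shift (x + -(l : ZMod M)) (arc n) := by
  intro v
  have hle (w : ZMod M) : |arc s w| ≤ arc n w := by
    rw [abs_of_nonneg (arc_nonneg s w)]; exact arc_mono hs w
  rw [← shift_add, add_comm, shift_add, ← shift_sub, arc_sub_shift, shift_sub, ← shift_add]
  exact (abs_sub _ _).trans (add_le_add (hle _) (hle _))

theorem dyadicUnif_add {M : ℕ} (j t : ℕ) : (dyadicUnif (j + t) : ZMod M → ℝ)
    = (2 ^ t : ℝ)⁻¹ • ∑ r ∈ Finset.range (2 ^ t),
      shift (-((2 ^ j * r : ℕ) : ZMod M)) (dyadicUnif j) := by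
  rw [dyadicUnif, pow_add (2 : ℕ), arc_mul, pow_add, mul_inv_rev, mul_smul, Finset.smul_sum]
  rfl

theorem groupConv_shift (x : G) (a f : G → ℝ) :
    groupConv (shift x a) f = groupConv a (shift x f) := by
  rw [groupConv_comm, walkOp_shift, groupConv_comm, walkOp_shift]

/-- The mean of `f - shift (-s) f` over the multiples `s < 2 ^ (j + t)` of `2 ^ j`. -/
def dyadicOsc {M : ℕ} (j t : ℕ) (f : ZMod M → ℝ) : ZMod M → ℝ :=
  (2 ^ t : ℝ)⁻¹ • ∑ r ∈ Finset.range (2 ^ t), (f - shift (-((2 ^ j * r : ℕ) : ZMod M)) f)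

theorem groupConv_dyadicOsc {M : ℕ} [NeZero M] (j t : ℕ) (f : ZMod M → ℝ) :
    groupConv (dyadicUnif j) (dyadicOsc j t f)
      = groupConv (dyadicUnif j - dyadicUnif (j + t)) f := by
  have hmean : groupConv (dyadicUnif (j + t)) f = (2 ^ t : ℝ)⁻¹ • ∑ r ∈ Finset.range (2 ^ t),
      groupConv (dyadicUnif j) (shift (-((2 ^ j * r : ℕ) : ZMod M)) f) := by
    simp only [← groupConv_shift]
    rw [groupConv_comm, dyadicUnif_add, map_smul, map_sum]
    simp only [groupConv_comm f]
  rw [groupConv_sub, hmean, dyadicOsc, map_smul, map_sum]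
  simp only [map_sub]
  rw [Finset.sum_sub_distrib, smul_sub, Finset.sum_const, Finset.card_range,
    ← Nat.cast_smul_eq_nsmul ℝ, Nat.cast_pow, Nat.cast_ofNat, inv_smul_smul₀ (by positivity)]

theorem abs_dyadicOsc_le {M : ℕ} {j t : ℕ} {f b : ZMod M → ℝ}
    (h : ∀ s : ℕ, s ≤ 2 ^ (j + t) → |f - shift (-(s : ZMod M)) f| ≤ b) : |dyadicOsc j t f| ≤ b := by
  intro v
  rw [Pi.abs_apply, dyadicOsc, Pi.smul_apply, smul_eq_mul, abs_mul, abs_of_pos (by positivity),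
    Finset.sum_apply, inv_mul_le_iff₀ (by positivity)]
  refine (Finset.abs_sum_le_sum_abs _ _).trans ((Finset.sum_le_sum fun r hr ↦
    h (2 ^ j * r) ?_ v).trans_eq ?_)
  · rw [pow_add]
    exact Nat.mul_le_mul_left _ (Finset.mem_range.1 hr).le
  · rw [Finset.sum_const, Finset.card_range, nsmul_eq_mul, Nat.cast_pow, Nat.cast_ofNat]

theorem arc_le_dotProduct_shift_arc {M : ℕ} [NeZero M] (j : ℕ) (q : ZMod M) :
    arc (2 ^ j) q ≤ dyadicUnif j ⬝ᵥ shift q (arc (2 ^ (j + 1))) := by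
  have hterm (i : ℕ) (hi : i ∈ Finset.range (2 ^ j)) :
      arc (2 ^ j) q ≤ shift q (arc (2 ^ (j + 1))) (i : ZMod M) := by
    have hle : i + 2 ^ j ≤ 2 ^ (j + 1) := by
      rw [pow_succ, mul_two]; exact Nat.add_le_add_right (Finset.mem_range.1 hi).le _
    refine le_trans ?_ (arc_mono hle _)
    rw [arc_add, Pi.add_apply, shift, add_neg_cancel_comm]
    exact le_add_of_nonneg_left (arc_nonneg _ _)
  rw [dyadicUnif, smul_dotProduct, arc_dotProduct, smul_eq_mul, le_inv_mul_iff₀ (by positivity)]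
  simpa using Finset.card_nsmul_le_sum _ _ _ hterm

namespace IsSymmProb

/- The arc is dominated by the cross-correlation of `dyadicUnif j` with an arc of twice the length,
and the `2 * N` steps of the walk split evenly between the two factors. -/
theorem walkOp_pow_arc_le {M : ℕ} [NeZero M] (hF : IsSymmProb F) (π : G →+ ZMod M)
    (N j : ℕ) (w : ZMod M) : (walkOp π F ^ (2 * N)) (arc (2 ^ j)) w ≤ 2 * dyadicConc π F N j := by
  set h := walkOp (-AddMonoidHom.id (ZMod M)) (dyadicUnif j) with h_def
  have happly (f : ZMod M → ℝ) (q : ZMod M) : h f q = dyadicUnif j ⬝ᵥ shift q f := by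
    simp only [h_def, walkOp_apply, AddMonoidHom.neg_apply, AddMonoidHom.id_apply, sub_neg_eq_add,
      dotProduct, shift, add_comm q]
  have hdom : arc (2 ^ j) ≤ h (arc (2 ^ (j + 1))) := fun q ↦
    (arc_le_dotProduct_shift_arc j q).trans_eq (happly _ q).symm
  have hcomm : (walkOp π F ^ (2 * N)) (h (arc (2 ^ (j + 1))))
      = h ((walkOp π F ^ (2 * N)) (arc (2 ^ (j + 1)))) :=
    LinearMap.congr_fun ((walkOp_commute π _ F _).pow_left (2 * N)).eq _
  have hsplit := dotProduct_le_half_l2norm_sq ((walkOp π F ^ N) (dyadicUnif j))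
    (shift w ((walkOp π F ^ N) (dyadicUnif (j + 1))))
  have hanti := powNormSq_dyadicUnif_antitone π F N j.le_succ
  rw [l2norm_shift] at hsplit
  simp only [powNormSq] at hanti
  calc (walkOp π F ^ (2 * N)) (arc (2 ^ j)) w
      ≤ (walkOp π F ^ (2 * N)) (h (arc (2 ^ (j + 1)))) w := hF.walkOp_pow_mono π _ hdom w
    _ = 2 ^ (j + 1) * ((walkOp π F ^ N) (dyadicUnif j)
          ⬝ᵥ shift w ((walkOp π F ^ N) (dyadicUnif (j + 1)))) := by
        rw [hcomm, happly, arc_two_pow, map_smul, two_mul, pow_add _ N, Module.End.mul_apply,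
          hF.walkOp_pow_dotProduct, walkOp_pow_shift]
        exact dotProduct_smul (2 ^ (j + 1) : ℝ) _
          (shift w ((walkOp π F ^ N) ((walkOp π F ^ N) (dyadicUnif (j + 1)))))
    _ ≤ 2 ^ (j + 1) * powNormSq π F (dyadicUnif j) N := by
        rw [powNormSq]
        gcongr
        linarith
    _ = 2 * dyadicConc π F N j := by rw [dyadicConc, pow_succ']; ring

end IsSymmProb

/-- The least scale `j` with `(1 / 2) ^ i ≤ dyadicConc π F N j`, and `0` if there is none. -/
def scaleIndex {M : ℕ} [NeZero M] (π : G →+ ZMod M) (F : G → ℝ) (N i : ℕ) : ℕ :=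
  sInf {j | (1 / 2 : ℝ) ^ i ≤ dyadicConc π F N j}

theorem dyadicConc_scaleIndex_le {M : ℕ} [NeZero M] {π : G →+ ZMod M} {N i : ℕ}
    (h : scaleIndex π F N i ≠ 0) : dyadicConc π F N (scaleIndex π F N i) ≤ 2 * (1 / 2) ^ i := by
  obtain ⟨j, hj⟩ := Nat.exists_eq_succ_of_ne_zero h
  have hlt : dyadicConc π F N j < (1 / 2) ^ i :=
    not_le.1 (Nat.notMem_of_lt_sInf (hj.symm ▸ j.lt_succ_self : j < scaleIndex π F N i))
  rw [hj]
  exact (dyadicConc_succ_le π F N j).trans (by gcongr)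

/-- The kernels splitting the unit mass at `0` according to scale: the first one averages at scale
`scaleIndex 1`, and the later ones refine the average from one scale to the next. -/
def scaleKernel {M : ℕ} [NeZero M] (π : G →+ ZMod M) (F : G → ℝ) (N : ℕ) : ℕ → ZMod M → ℝ
  | 0 => dyadicUnif (scaleIndex π F N 1)
  | i + 1 => dyadicUnif (scaleIndex π F N (i + 2)) - dyadicUnif (scaleIndex π F N (i + 1))

theorem sum_abs_scaleKernel_le {M : ℕ} [NeZero M] (π : G →+ ZMod M) (F : G → ℝ) (N i : ℕ) :
    ∑ x, |scaleKernel π F N i x| ≤ 2 := by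
  have habs (j : ℕ) : ∑ x : ZMod M, |dyadicUnif j x| = 1 := by
    simp only [fun x : ZMod M ↦ abs_of_nonneg (dyadicUnif_nonneg j x), sum_dyadicUnif]
  cases i with
  | zero => exact (habs _).trans_le one_le_two
  | succ i =>
    refine (Finset.sum_le_sum fun x _ ↦ abs_sub _ _).trans_eq ?_
    rw [Finset.sum_add_distrib, habs, habs, one_add_one_eq_two]

theorem sum_range_scaleKernel {M : ℕ} [NeZero M] (π : G →+ ZMod M) (F : G → ℝ) (N i : ℕ) :
    ∑ k ∈ Finset.range (i + 1), scaleKernel π F N k = dyadicUnif (scaleIndex π F N (i + 1)) := by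
  rw [Finset.sum_range_succ']
  simp only [scaleKernel]
  rw [Finset.sum_range_sub fun k ↦ dyadicUnif (scaleIndex π F N (k + 1)), zero_add, sub_add_cancel]

/-- A function of size at most one which is carried, up to constants, by a set to which the walk
gives mass at most `(1 / 2) ^ i`, together with a scale `j` at which arcs have at least that
mass. -/
structure IsScalePiece {M : ℕ} [NeZero M] (π : G →+ ZMod M) (F : G → ℝ) (N i j : ℕ)
    (g : ZMod M → ℝ) : Prop where
  two_pow_le : 2 ^ j ≤ M
  half_pow_le : (1 / 2 : ℝ) ^ (i + 1) ≤ dyadicConc π F N j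
  abs_le_one : |g| ≤ 1
  walkOp_pow_abs_le (w : ZMod M) : (walkOp π F ^ (2 * N)) |g| w ≤ 8 * (1 / 2) ^ i

theorem abs_shift_arc_sub_shift_le_one {M : ℕ} [NeZero M] {l : ℕ} (hl : l ≤ M) (x y : ZMod M) :
    |shift x (arc l) - shift y (shift x (arc l))| ≤ 1 := fun _ ↦
  abs_sub_le_of_nonneg_of_le (arc_nonneg l _) (arc_le_one hl _) (arc_nonneg l _) (arc_le_one hl _)

namespace IsSymmProb

theorem half_pow_le_dyadicConc_self (hF : IsSymmProb F) (π : G →+ ZMod (2 ^ L)) (N i : ℕ) :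
    (1 / 2 : ℝ) ^ i ≤ dyadicConc π F N L :=
  (pow_le_one₀ (by norm_num) (by norm_num)).trans (hF.one_le_dyadicConc π N le_rfl)

theorem half_pow_le_dyadicConc_scaleIndex (hF : IsSymmProb F) (π : G →+ ZMod (2 ^ L)) (N i : ℕ) :
    (1 / 2 : ℝ) ^ i ≤ dyadicConc π F N (scaleIndex π F N i) :=
  Nat.sInf_mem (s := {j | (1 / 2 : ℝ) ^ i ≤ dyadicConc π F N j})
    ⟨L, hF.half_pow_le_dyadicConc_self π N i⟩

theorem scaleIndex_le (hF : IsSymmProb F) (π : G →+ ZMod (2 ^ L)) (N i : ℕ) :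
    scaleIndex π F N i ≤ L :=
  Nat.sInf_le (hF.half_pow_le_dyadicConc_self π N i)

theorem scaleIndex_antitone (hF : IsSymmProb F) (π : G →+ ZMod (2 ^ L)) (N : ℕ) :
    Antitone (scaleIndex π F N) := fun _ _ h ↦
  Nat.sInf_le ((pow_le_pow_of_le_one (by norm_num) (by norm_num) h).trans
    (hF.half_pow_le_dyadicConc_scaleIndex π N _))

theorem scaleIndex_self (hF : IsSymmProb F) (π : G →+ ZMod (2 ^ L)) (N : ℕ) :
    scaleIndex π F N L = 0 := by
  have hzero : (1 / 2 : ℝ) ^ L ≤ dyadicConc π F N 0 := by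
    rw [one_div, inv_pow, inv_le_iff_one_le_mul₀' (by positivity)]
    exact (hF.one_le_dyadicConc π N le_rfl).trans (dyadicConc_le π F N L)
  exact Nat.le_zero.1 (Nat.sInf_le hzero)

theorem sum_groupConv_scaleKernel (hF : IsSymmProb F) (π : G →+ ZMod (2 ^ L)) (N : ℕ)
    (f : ZMod (2 ^ L) → ℝ) :
    ∑ i ∈ Finset.range (L + 1), groupConv (scaleKernel π F N i) f = f := by
  have hindex : scaleIndex π F N (L + 1) = 0 :=
    Nat.le_zero.1 ((hF.scaleIndex_antitone π N L.le_succ).trans_eq (hF.scaleIndex_self π N))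
  simp only [groupConv_comm _ f]
  rw [← map_sum, sum_range_scaleKernel, hindex, dyadicUnif_zero, groupConv_comm]
  funext v
  simp [walkOp_apply, Pi.single_apply]

theorem exists_isScalePiece (hF : IsSymmProb F) (π : G →+ ZMod (2 ^ L)) (N i : ℕ) {l : ℕ}
    (hl : l ≤ 2 ^ L) (x : ZMod (2 ^ L)) :
    ∃ j g, IsScalePiece π F N i j g ∧
      groupConv (dyadicUnif j) g = groupConv (scaleKernel π F N i) (shift x (arc l)) := by
  have two_pow_le : 2 ^ scaleIndex π F N (i + 1) ≤ 2 ^ L :=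
    Nat.pow_le_pow_right two_pos (hF.scaleIndex_le π N _)
  have half_pow_le := hF.half_pow_le_dyadicConc_scaleIndex π N (i + 1)
  refine ⟨scaleIndex π F N (i + 1), ?_⟩
  cases i with
  | zero =>
    have habs : |shift x (arc l)| ≤ 1 := fun v ↦
      (abs_of_nonneg (arc_nonneg l _)).trans_le (arc_le_one hl _)
    exact ⟨_, ⟨two_pow_le, half_pow_le, habs, fun w ↦
      (hF.walkOp_pow_le π _ (c := 1) habs w).trans (by norm_num)⟩, rfl⟩
  | succ i =>
    obtain ⟨t, ht⟩ := Nat.exists_eq_add_of_le (hF.scaleIndex_antitone π N (i + 1).le_succ)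
    set j := scaleIndex π F N (i + 1) with hj
    set j' := scaleIndex π F N (i + 1 + 1)
    refine ⟨dyadicOsc j' t (shift x (arc l)), ⟨two_pow_le, half_pow_le,
      abs_dyadicOsc_le fun s _ ↦ abs_shift_arc_sub_shift_le_one hl x _, fun w ↦ ?_⟩, ?_⟩
    · obtain hj0 | hj0 := eq_or_ne j 0
      · obtain rfl : t = 0 := by omega
        have hzero : dyadicOsc j' 0 (shift x (arc l)) = 0 := by simp [dyadicOsc, shift_zero]
        rw [hzero, abs_zero, map_zero]
        positivity
      · have hosc := abs_dyadicOsc_le (j := j') (t := t) fun s hs ↦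
          abs_shift_arc_sub_shift_le hs x l
        refine (hF.walkOp_pow_mono π _ hosc w).trans ?_
        rw [map_add, walkOp_pow_shift, walkOp_pow_shift, ← ht]
        have hconc := dyadicConc_scaleIndex_le (hj ▸ hj0)
        have hleft := hF.walkOp_pow_arc_le π N j (w + x)
        have hright := hF.walkOp_pow_arc_le π N j (w + (x + -(l : ZMod (2 ^ L))))
        rw [← hj] at hconc
        rw [pow_succ] at hconc ⊢
        exact (add_le_add hleft hright).trans (by linarith)
    · rw [groupConv_dyadicOsc, ← ht]
      rfl

end IsSymmProb

end Multiscale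

section ProductWalk

open Function Pointwise

section Tensor

variable {ι K : Type*} [Fintype ι]

/-- The tensor product `v ↦ ∏ r, f r (v r)` of functions of the coordinates. -/
def piTensor (f : ι → K → ℝ) : (ι → K) → ℝ := fun v ↦ ∏ r, f r (v r)

theorem abs_piTensor (f : ι → K → ℝ) : |piTensor f| = piTensor fun r ↦ |f r| :=
  funext fun _ ↦ Finset.abs_prod _ _

theorem piTensor_nonneg {f : ι → K → ℝ} (h : ∀ r, 0 ≤ f r) : 0 ≤ piTensor f :=
  fun _ ↦ Finset.prod_nonneg fun r _ ↦ h r _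

theorem piTensor_le_comp_eval {f : ι → K → ℝ} (h0 : ∀ r, 0 ≤ f r) (h1 : ∀ r, f r ≤ 1) (r : ι)
    (v : ι → K) : piTensor f v ≤ f r (v r) := by
  classical
  rw [piTensor, ← Finset.mul_prod_erase _ _ (Finset.mem_univ r)]
  exact mul_le_of_le_one_right (h0 r _)
    (Finset.prod_le_one (fun s _ ↦ h0 s _) fun s _ ↦ h1 s _)

theorem eval_mem_support_of_mem_support_piTensor {f : ι → K → ℝ} {v : ι → K}
    (hv : v ∈ support (piTensor f)) (r : ι) : v r ∈ support (f r) :=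
  Finset.prod_ne_zero_iff.1 hv r (Finset.mem_univ r)

variable [DecidableEq ι] [Fintype K]

theorem sum_piTensor (f : ι → K → ℝ) : ∑ v, piTensor f v = ∏ r, ∑ x, f r x :=
  (Fintype.prod_sum f).symm

theorem piTensor_dotProduct (f g : ι → K → ℝ) :
    piTensor f ⬝ᵥ piTensor g = ∏ r, f r ⬝ᵥ g r := by
  simp only [dotProduct, ← sum_piTensor, piTensor, Finset.prod_mul_distrib]

theorem l2norm_sq_piTensor (f : ι → K → ℝ) : l2norm (piTensor f) ^ 2 = ∏ r, l2norm (f r) ^ 2 := by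
  simp only [l2norm_sq, piTensor_dotProduct]

variable [AddCommGroup K]

theorem groupConv_piTensor (c f : ι → K → ℝ) :
    groupConv (piTensor c) (piTensor f) = piTensor fun r ↦ groupConv (c r) (f r) := by
  funext v
  simp only [walkOp_apply, AddMonoidHom.id_apply, piTensor, Fintype.prod_sum,
    Finset.prod_mul_distrib, Pi.sub_apply]

theorem autocorr_piTensor (φ : ι → K → ℝ) (y : ι → K) :
    autocorr (piTensor φ) y = ∏ r, autocorr (φ r) (y r) :=
  piTensor_dotProduct φ fun r ↦ shift (y r) (φ r)

end Tensor

theorem one_sub_prod_le_sum {ι : Type*} (s : Finset ι) {f : ι → ℝ} (h0 : ∀ i, 0 ≤ f i)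
    (h1 : ∀ i, f i ≤ 1) : 1 - ∏ i ∈ s, f i ≤ ∑ i ∈ s, (1 - f i) := by
  classical
  induction s using Finset.induction_on with
  | empty => simp
  | insert a s ha ih =>
    rw [Finset.prod_insert ha, Finset.sum_insert ha]
    have hprod : ∏ i ∈ s, f i ≤ 1 := Finset.prod_le_one (fun i _ ↦ h0 i) fun i _ ↦ h1 i
    nlinarith [h0 a, h1 a]

variable {ι : Type*} [Fintype ι] [DecidableEq ι]

/-- The projection of `ι → K` to the coordinate `r`. -/
abbrev evalHom (K : Type*) [AddCommGroup K] (r : ι) : (ι → K) →+ K :=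
  Pi.evalAddMonoidHom (fun _ ↦ K) r

theorem groupConv_pow_comp_eval {K : Type*} [AddCommGroup K] [Fintype K] (F : (ι → K) → ℝ)
    (r : ι) (n : ℕ) (f : K → ℝ) (v : ι → K) :
    (groupConv F ^ n) (fun v ↦ f (v r)) v = (walkOp (evalHom K r) F ^ n) f (v r) := by
  rw [← walkOp_convPower, ← walkOp_convPower]; rfl

variable {M : ℕ} [NeZero M] {F : (ι → ZMod M) → ℝ} {N : ℕ} {i j : ι → ℕ}
  {φ : ι → ZMod M → ℝ} {S : ι → Finset (ZMod M)} {g : ι → ZMod M → ℝ}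

theorem l2norm_piTensor_dyadicUnif_mul_sqrt_le (hj : ∀ r, 2 ^ j r ≤ M) (I : ℕ) :
    l2norm (piTensor fun r ↦ (dyadicUnif (j r) : ZMod M → ℝ))
        * √(8 * (1 / 2) ^ I * ∏ r, (2 ^ 29 * 2 ^ j r))
      ≤ 2 ^ (15 * Fintype.card ι + 2) * 0.71 ^ I := by
  have : (0 : ℝ) ≤ ∏ r, (2 ^ 29 * 2 ^ j r) := Finset.prod_nonneg fun r _ ↦ by positivity
  refine (sq_le_sq₀ (mul_nonneg (l2norm_nonneg _) (Real.sqrt_nonneg _)) (by positivity)).1 ?_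
  rw [mul_pow, Real.sq_sqrt (by positivity), l2norm_sq_piTensor]
  calc (∏ r, l2norm (dyadicUnif (j r) : ZMod M → ℝ) ^ 2)
          * (8 * (1 / 2) ^ I * ∏ r, (2 ^ 29 * 2 ^ j r))
      ≤ (∏ r, (2 ^ j r : ℝ)⁻¹) * (8 * (1 / 2) ^ I * ∏ r, (2 ^ 29 * 2 ^ j r)) := by
        gcongr with r
        exact l2norm_sq_dyadicUnif_le (hj r)
    _ = 8 * (1 / 2) ^ I * ∏ r : ι, ((2 ^ j r : ℝ)⁻¹ * (2 ^ 29 * 2 ^ j r)) := by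
        rw [mul_left_comm, ← Finset.prod_mul_distrib]
    _ = 8 * (1 / 2) ^ I * (2 ^ 29) ^ Fintype.card ι := by
        have hterm (r : ι) : (2 ^ j r : ℝ)⁻¹ * (2 ^ 29 * 2 ^ j r) = 2 ^ 29 := by
          rw [mul_left_comm, inv_mul_cancel₀ (by positivity), mul_one]
        simp only [hterm, Finset.prod_const, Finset.card_univ]
    _ ≤ 16 * (0.71 ^ 2) ^ I * (2 ^ 30) ^ Fintype.card ι := by gcongr <;> norm_num
    _ = (2 ^ (15 * Fintype.card ι + 2) * 0.71 ^ I) ^ 2 := by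
        rw [mul_pow, pow_right_comm, ← pow_mul 2 30, ← pow_mul 2 (_ + _)]
        ring

theorem IsScalePiece.abs_piTensor_le_comp_eval
    (hg : ∀ r, IsScalePiece (evalHom (ZMod M) r) F N (i r) (j r) (g r)) (r : ι) :
    |piTensor g| ≤ fun v ↦ |g r| (v r) := by
  rw [abs_piTensor]
  exact piTensor_le_comp_eval (fun r ↦ abs_nonneg (g r)) (fun r ↦ (hg r).abs_le_one) r

namespace IsLocalizer

theorem l2norm_piTensor
    (hφ : ∀ r, IsLocalizer (evalHom (ZMod M) r) F N (i r) (j r) (φ r) (S r)) :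
    l2norm (piTensor φ) = 1 := by
  rw [← sq_eq_sq₀ (l2norm_nonneg _) zero_le_one, l2norm_sq_piTensor]
  simp only [(hφ _).l2norm_eq_one, one_pow, Finset.prod_const_one]

theorem lostMass_piTensor_le (hF : IsSymmProb F)
    (hφ : ∀ r, IsLocalizer (evalHom (ZMod M) r) F N (i r) (j r) (φ r) (S r)) {I : ℕ}
    (hI : ∀ r, i r ≤ I) :
    lostMass (convPower F 2) (piTensor φ)
      ≤ Fintype.card ι * (819200000 * 1.21 ^ I / N) := by
  calc lostMass (convPower F 2) (piTensor φ)
      ≤ ∑ y, convPower F 2 y * ∑ r, (1 - autocorr (φ r) (y r)) := by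
        refine Finset.sum_le_sum fun y _ ↦
          mul_le_mul_of_nonneg_left ?_ ((hF.convPower 2).nonneg y)
        rw [autocorr_piTensor]
        exact one_sub_prod_le_sum _ (fun r ↦ autocorr_nonneg (hφ r).nonneg _)
          fun r ↦ autocorr_le_one (hφ r).l2norm_eq_one _
    _ = ∑ r, ∑ y, convPower F 2 y * (1 - autocorr (φ r) (y r)) := by
        simp only [Finset.mul_sum]
        exact Finset.sum_comm
    _ ≤ ∑ _r : ι, (819200000 * 1.21 ^ I / N : ℝ) := by
        refine Finset.sum_le_sum fun r _ ↦ (hφ r).sum_one_sub_autocorr_le.trans ?_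
        gcongr
        · norm_num
        · exact hI r
    _ = Fintype.card ι * (819200000 * 1.21 ^ I / N) := by
        rw [Finset.sum_const, Finset.card_univ, nsmul_eq_mul]

theorem support_piTensor_subset
    (hφ : ∀ r, IsLocalizer (evalHom (ZMod M) r) F N (i r) (j r) (φ r) (S r)) :
    support (piTensor φ) - support (piTensor φ) + (support (piTensor φ) - support (piTensor φ))
        + support (piTensor fun r ↦ (dyadicUnif (j r) : ZMod M → ℝ))
      ⊆ ↑(Fintype.piFinset S) := by
  rintro _ ⟨_, ⟨_, ⟨a, ha, b, hb, rfl⟩, _, ⟨c, hc, d, hd, rfl⟩, rfl⟩, u, hu, rfl⟩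
  refine Finset.mem_coe.2 (Fintype.mem_piFinset.2 fun r ↦ (hφ r).support_subset ?_)
  have hsupp {f : ι → ZMod M → ℝ} {v : ι → ZMod M} (hv : v ∈ support (piTensor f)) :=
    eval_mem_support_of_mem_support_piTensor hv r
  exact Set.add_mem_add (Set.add_mem_add (Set.sub_mem_sub (hsupp ha) (hsupp hb))
    (Set.sub_mem_sub (hsupp hc) (hsupp hd))) (hsupp hu)

theorem sum_abs_piTensor_le
    (hφ : ∀ r, IsLocalizer (evalHom (ZMod M) r) F N (i r) (j r) (φ r) (S r))
    (hg : ∀ r, IsScalePiece (evalHom (ZMod M) r) F N (i r) (j r) (g r)) (x : ι → ZMod M) :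
    ∑ z ∈ Fintype.piFinset S, |piTensor g| (x - z) ≤ ∏ r, (2 ^ 29 * 2 ^ j r) := by
  simp only [abs_piTensor, piTensor, Pi.sub_apply]
  rw [← Finset.prod_univ_sum S fun r z ↦ |g r| (x r - z)]
  refine Finset.prod_le_prod (fun r _ ↦ Finset.sum_nonneg fun z _ ↦ abs_nonneg (g r _))
    fun r _ ↦ ?_
  refine ((hφ r).sum_le (abs_nonneg (g r)) (hg r).walkOp_pow_abs_le (x r)).trans_eq ?_
  calc (2 ^ 26 * 2 ^ i r * 2 ^ j r * (8 * (1 / 2) ^ i r) : ℝ)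
      = 2 ^ 29 * 2 ^ j r * (2 * (1 / 2)) ^ i r := by rw [mul_pow]; ring
    _ = 2 ^ 29 * 2 ^ j r := by norm_num

end IsLocalizer

namespace IsSymmProb

theorem groupConv_pow_abs_piTensor_le (hF : IsSymmProb F)
    (hg : ∀ r, IsScalePiece (evalHom (ZMod M) r) F N (i r) (j r) (g r)) {n : ℕ} (hn : 2 * N ≤ n)
    (r : ι) (w : ι → ZMod M) : (groupConv F ^ n) |piTensor g| w ≤ 8 * (1 / 2) ^ i r := by
  refine (hF.walkOp_pow_mono _ n (IsScalePiece.abs_piTensor_le_comp_eval hg r) w).trans ?_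
  obtain ⟨s, rfl⟩ := Nat.exists_eq_add_of_le' hn
  rw [groupConv_pow_comp_eval, pow_add, Module.End.mul_apply]
  exact hF.walkOp_pow_le _ s (hg r).walkOp_pow_abs_le _

theorem abs_powDiff_piTensor_le (hF : IsSymmProb F)
    (hg : ∀ r, IsScalePiece (evalHom (ZMod M) r) F N (i r) (j r) (g r)) {n : ℕ} (hn : 2 * N ≤ n)
    (r : ι) (w : ι → ZMod M) :
    |powDiff (AddMonoidHom.id _) F n
        (groupConv (piTensor fun r ↦ dyadicUnif (j r)) (piTensor g)) w| ≤ 16 * (1 / 2) ^ i r := by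
  have hmass : ∑ x, |piTensor (fun r ↦ (dyadicUnif (j r) : ZMod M → ℝ)) x| = 1 := by
    simp only [fun x ↦ abs_of_nonneg (piTensor_nonneg (fun r ↦ dyadicUnif_nonneg (M := M) (j r)) x),
      sum_piTensor, sum_dyadicUnif, Finset.prod_const_one]
  have hpow (k : ℕ) (hk : 2 * N ≤ k) : |(groupConv F ^ k)
      (groupConv (piTensor fun r ↦ dyadicUnif (j r)) (piTensor g)) w| ≤ 8 * (1 / 2) ^ i r := by
    have hcomm := LinearMap.congr_fun ((walkOp_commute (AddMonoidHom.id _) (AddMonoidHom.id _) F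
      (piTensor fun r ↦ dyadicUnif (j r))).pow_left k).eq (piTensor g)
    rw [Module.End.mul_apply, Module.End.mul_apply] at hcomm
    rw [hcomm]
    refine (abs_groupConv_le_mul _ (f := (groupConv F ^ k) (piTensor g)) (fun v ↦
      (hF.abs_walkOp_pow_le _ k _ v).trans (hF.groupConv_pow_abs_piTensor_le hg hk r v)) w).trans_eq
      ?_
    rw [hmass, one_mul]
  rw [powDiff, LinearMap.sub_apply, Pi.sub_apply]
  exact (abs_sub _ _).trans (by linarith [hpow n hn, hpow (n + 2) (by omega)])

theorem abs_powDiff_piTensor_add_le (hF : IsSymmProb F) (hN : N ≠ 0)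
    (hg : ∀ r, IsScalePiece (evalHom (ZMod M) r) F N (i r) (j r) (g r)) {r₀ : ι}
    (hr₀ : ∀ r, i r ≤ i r₀) {e : ℝ}
    (he : Fintype.card ι * (819200000 * 1.21 ^ i r₀ / N) ≤ e) {n : ℕ} (hn : 2 * N ≤ n) (σ : ℕ)
    {B : ℝ} (hB : ∀ w, |powDiff (AddMonoidHom.id _) F n
      (groupConv (piTensor fun r ↦ dyadicUnif (j r)) (piTensor g)) w| ≤ B) (w : ι → ZMod M) :
    |powDiff (AddMonoidHom.id _) F (n + 2 * σ)
        (groupConv (piTensor fun r ↦ dyadicUnif (j r)) (piTensor g)) w|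
      ≤ (2 / (σ + 1) + 2 * e) * (2 ^ (15 * Fintype.card ι + 2) * 0.71 ^ i r₀)
        + e * (8 * (1 / 2) ^ i r₀) + σ * e * B := by
  choose φ S hφ using fun r ↦
    hF.exists_isLocalizer (evalHom (ZMod M) r) hN (hg r).two_pow_le (hg r).half_pow_le
  have hmass : ∑ x, piTensor (fun r ↦ (dyadicUnif (j r) : ZMod M → ℝ)) x = 1 := by
    simp only [sum_piTensor, sum_dyadicUnif, Finset.prod_const_one]
  have hloss := (IsLocalizer.lostMass_piTensor_le hF hφ hr₀).trans he
  have hloss0 := (hF.convPower 2).lostMass_nonneg (IsLocalizer.l2norm_piTensor hφ)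
  have hB0 : 0 ≤ B := (abs_nonneg _).trans (hB w)
  have hmain := hF.abs_powDiff_groupConv_le (piTensor_nonneg fun r ↦ (hφ r).nonneg)
    (IsLocalizer.l2norm_piTensor hφ) (piTensor_nonneg fun r ↦ dyadicUnif_nonneg (j r)) hmass
    (IsLocalizer.support_piTensor_subset hφ) σ n
    (hF.groupConv_pow_abs_piTensor_le hg hn r₀)
    (IsLocalizer.sum_abs_piTensor_le hφ hg) hB w
  refine hmain.trans ?_
  rw [mul_assoc (2 / _ + _)]
  have he0 : 0 ≤ e := hloss0.trans hloss
  have hsqrt := l2norm_piTensor_dyadicUnif_mul_sqrt_le (fun r ↦ (hg r).two_pow_le) (i r₀)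
  refine add_le_add (add_le_add (mul_le_mul (by gcongr) hsqrt ?_ (by positivity)) (by gcongr))
    (by gcongr)
  exact mul_nonneg (l2norm_nonneg _) (Real.sqrt_nonneg _)

end IsSymmProb

end ProductWalk

section Iteration

theorem exists_add_two_mul_mul_eq {n σ : ℕ} (hσ : σ ≠ 0) (hn : 4 * σ ≤ n) :
    ∃ n' k : ℕ, n' + 2 * σ * k = n ∧ n ≤ 2 * n' ∧ n' < n ∧ n < 4 * σ * (k + 1) := by
  have hle : 4 * σ * (n / (4 * σ)) ≤ n := Nat.mul_div_le _ _
  have hpos : 0 < σ * (n / (4 * σ)) :=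
    Nat.mul_pos (Nat.pos_of_ne_zero hσ) (Nat.div_pos hn (by omega))
  refine ⟨n - 2 * σ * (n / (4 * σ)), n / (4 * σ), ?_, ?_, ?_, Nat.lt_mul_div_succ n (by omega)⟩
  all_goals rw [mul_assoc] at hle ⊢; omega

theorem exists_step_of_two_mul_le {n : ℕ} (hn : n ≠ 0) {y : ℝ} (hy : 2 ≤ y) (hyn : 2 * y ≤ n) :
    ∃ n' σ k : ℕ, n' + 2 * σ * k = n ∧ n ≤ 2 * n' ∧ n' < n ∧ σ * (y / n) ≤ 1 / 2 ∧
      2 / (σ + 1) ≤ 4 * (y / n) ∧ (1 / 2) ^ k ≤ 2 / y := by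
  have hn0 : (0 : ℝ) < n := by exact_mod_cast Nat.pos_of_ne_zero hn
  obtain ⟨σ, hσ⟩ : ∃ σ, σ = ⌊(n : ℝ) / (2 * y)⌋₊ := ⟨_, rfl⟩
  have hσ1 : 1 ≤ σ := hσ ▸ (Nat.one_le_floor_iff _).2 ((one_le_div (by linarith)).2 hyn)
  have : (1 : ℝ) ≤ σ := by exact_mod_cast hσ1
  have hσn : σ * (2 * y) ≤ n :=
    (le_div_iff₀ (by linarith)).1 (hσ ▸ Nat.floor_le (by positivity))
  have hnσ : n < (σ + 1) * (2 * y) :=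
    (div_lt_iff₀ (by linarith)).1 (hσ ▸ Nat.lt_floor_add_one _)
  have hσ4 : 4 * σ ≤ n := by
    have : (4 * σ : ℝ) ≤ n := by nlinarith
    exact_mod_cast this
  obtain ⟨n', k, hn', hhalf, hlt, hnk⟩ := exists_add_two_mul_mul_eq (by omega : σ ≠ 0) hσ4
  refine ⟨n', σ, k, hn', hhalf, hlt, ?_, ?_, ?_⟩
  · rw [← mul_div_assoc, div_le_iff₀ hn0]; linarith
  · rw [div_le_iff₀ (by positivity), ← mul_div_assoc, div_mul_eq_mul_div, le_div_iff₀ hn0]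
    linarith
  · have hyk : y / 2 ≤ k + 1 := by
      have hlt : σ * (2 * y) < σ * (4 * (k + 1)) := by
        refine hσn.trans_lt ?_
        rw [← mul_assoc, mul_comm (σ : ℝ) 4]
        exact_mod_cast hnk
      linarith [lt_of_mul_lt_mul_left hlt (Nat.cast_nonneg σ)]
    have hpow : (k + 1 : ℝ) ≤ 2 ^ k := by exact_mod_cast Nat.lt_two_pow_self (n := k)
    rw [one_div_pow, ← one_div_div y 2]
    exact one_div_le_one_div_of_le (by positivity) (hyk.trans hpow)

theorem mul_div_natDiv_four_le {n : ℕ} (hn : 4 ≤ n) {b c x A : ℝ} (hb : 0 ≤ b) (hc : 0 ≤ c)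
    (hx : 0 ≤ x) (hA : b * c * 8 ≤ A) : b * (c * x / (n / 4 : ℕ)) ≤ A * x / n := by
  have : (0 : ℝ) < n := by exact_mod_cast (by omega : 0 < n)
  have hN : (n : ℝ) / 8 ≤ (n / 4 : ℕ) := by
    have hN8 : (n : ℝ) ≤ 8 * (n / 4 : ℕ) := by exact_mod_cast (by omega : n ≤ 8 * (n / 4))
    linarith
  calc b * (c * x / (n / 4 : ℕ)) ≤ b * (c * x / (n / 8)) := by gcongr
    _ = b * c * 8 * x / n := by field_simp
    _ ≤ A * x / n := by gcongr

theorem two_mul_step_error_le {A P n s : ℝ} (i : ℕ) (hA : 0 ≤ A) (hn : 0 ≤ n) (hP : 4 ≤ P)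
    (hs : s ≤ 4 * (A * 1.21 ^ i / n)) :
    2 * ((s + 2 * (A * 1.21 ^ i / n)) * (P * 0.71 ^ i)
        + A * 1.21 ^ i / n * (8 * (1 / 2) ^ i))
      ≤ 16 * A * P / n * 0.86 ^ i := by
  have h71 : (1.21 ^ i * 0.71 ^ i : ℝ) ≤ 0.86 ^ i := by rw [← mul_pow]; gcongr; norm_num
  have hhalf : (1.21 ^ i * (1 / 2) ^ i : ℝ) ≤ 0.86 ^ i := by rw [← mul_pow]; gcongr; norm_num
  calc _ ≤ 2 * ((4 * (A * 1.21 ^ i / n) + 2 * (A * 1.21 ^ i / n)) * (P * 0.71 ^ i)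
          + A * 1.21 ^ i / n * (2 * P * (1 / 2) ^ i)) := by gcongr; linarith
    _ = A * P / n * (12 * (1.21 ^ i * 0.71 ^ i) + 4 * (1.21 ^ i * (1 / 2) ^ i)) := by ring
    _ ≤ A * P / n * (12 * 0.86 ^ i + 4 * 0.86 ^ i) := by gcongr
    _ = 16 * A * P / n * 0.86 ^ i := by ring

variable {ι : Type*} [Fintype ι]

section Piece

variable [DecidableEq ι] {M : ℕ} [NeZero M] {F : (ι → ZMod M) → ℝ} {N : ℕ} {i j : ι → ℕ}
  {g : ι → ZMod M → ℝ}

namespace IsSymmProb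

theorem abs_powDiff_piTensor_add_mul_le (hF : IsSymmProb F) (hN : N ≠ 0)
    (hg : ∀ r, IsScalePiece (evalHom (ZMod M) r) F N (i r) (j r) (g r)) {r₀ : ι}
    (hr₀ : ∀ r, i r ≤ i r₀) {e : ℝ}
    (he : Fintype.card ι * (819200000 * 1.21 ^ i r₀ / N) ≤ e) {n σ : ℕ} (hn : 2 * N ≤ n)
    (hσ : σ * e ≤ 1 / 2) {B : ℝ} (hB : ∀ w, |powDiff (AddMonoidHom.id _) F n
      (groupConv (piTensor fun r ↦ dyadicUnif (j r)) (piTensor g)) w| ≤ B) (k : ℕ)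
    (w : ι → ZMod M) :
    |powDiff (AddMonoidHom.id _) F (n + 2 * σ * k)
        (groupConv (piTensor fun r ↦ dyadicUnif (j r)) (piTensor g)) w|
      ≤ 2 * ((2 / (σ + 1) + 2 * e) * (2 ^ (15 * Fintype.card ι + 2) * 0.71 ^ i r₀)
        + e * (8 * (1 / 2) ^ i r₀)) + (1 / 2) ^ k * B := by
  have he0 : 0 ≤ e := le_trans (by positivity) he
  have hB0 : 0 ≤ B := (abs_nonneg _).trans (hB w)
  set b := (2 / (σ + 1) + 2 * e) * (2 ^ (15 * Fintype.card ι + 2) * 0.71 ^ i r₀)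
    + e * (8 * (1 / 2) ^ i r₀) with hb
  have hb0 : 0 ≤ b := by positivity
  induction k generalizing w with
  | zero => simpa using (hB w).trans (by linarith)
  | succ k ih =>
    have hstep := hF.abs_powDiff_piTensor_add_le hN hg hr₀ he (Nat.le_add_right_of_le hn) σ ih w
    rw [← hb, add_assoc n] at hstep
    have hhalf : σ * e * (2 * b + (1 / 2) ^ k * B) ≤ 1 / 2 * (2 * b + (1 / 2) ^ k * B) := by gcongr
    rw [mul_add_one, pow_succ]
    linarith

theorem abs_powDiff_piTensor_le_of_forall_lt (hF : IsSymmProb F) {n : ℕ} (hn : 8 ≤ n)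
    (hg : ∀ r, IsScalePiece (evalHom (ZMod M) r) F (n / 4) (i r) (j r) (g r)) {r₀ : ι}
    (hr₀ : ∀ r, i r ≤ i r₀) {A B : ℝ} (hA2 : 2 ≤ A)
    (hA : Fintype.card ι * 819200000 * 8 ≤ A)
    (hB : ∀ n', n ≤ 2 * n' → n' < n → ∀ w, |powDiff (AddMonoidHom.id _) F n'
      (groupConv (piTensor fun r ↦ dyadicUnif (j r)) (piTensor g)) w| ≤ B) (w : ι → ZMod M) :
    |powDiff (AddMonoidHom.id _) F n
        (groupConv (piTensor fun r ↦ dyadicUnif (j r)) (piTensor g)) w|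
      ≤ (16 * A * 2 ^ (15 * Fintype.card ι + 2) / n + 2 * B / A) * 0.86 ^ i r₀ := by
  have hn0 : (0 : ℝ) < n := by exact_mod_cast (by omega : 0 < n)
  have hB0 : 0 ≤ B := (abs_nonneg _).trans (hB (n - 1) (by omega) (by omega) w)
  set P : ℝ := 2 ^ (15 * Fintype.card ι + 2) with hP_def
  have hP : 4 ≤ P := by
    rw [hP_def, pow_add]
    linarith [one_le_pow₀ (one_le_two (α := ℝ)) (n := 15 * Fintype.card ι)]
  set x : ℝ := 1.21 ^ i r₀ with hx
  have hx1 : 1 ≤ x := one_le_pow₀ (by norm_num)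
  have hxhalf : x * (1 / 2) ^ i r₀ ≤ 0.86 ^ i r₀ := by rw [hx, ← mul_pow]; gcongr; norm_num
  have hxinv : 1 / x ≤ 0.86 ^ i r₀ := by rw [hx, ← one_div_pow]; gcongr; norm_num
  have hAP : A * 4 ≤ A * P := by gcongr
  rw [add_mul]
  obtain hlt | hle := lt_or_ge (n : ℝ) (2 * (A * x))
  · calc _ ≤ 16 * (1 / 2) ^ i r₀ := hF.abs_powDiff_piTensor_le hg (by omega) r₀ w
      _ ≤ 16 * (1 / 2) ^ i r₀ * (2 * (A * x) / n) :=
        le_mul_of_one_le_right (by positivity) ((one_le_div hn0).2 hlt.le)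
      _ = 32 * A / n * (x * (1 / 2) ^ i r₀) := by ring
      _ ≤ 16 * A * P / n * 0.86 ^ i r₀ := mul_le_mul
        (div_le_div_of_nonneg_right (by linarith) hn0.le) hxhalf (by positivity) (by positivity)
      _ ≤ _ := le_add_of_nonneg_right (by positivity)
  · obtain ⟨n', σ, k, hn', hhalf, hlt, hσe, hσ, hk⟩ :=
      exists_step_of_two_mul_le (by omega)
        (hA2.trans (le_mul_of_one_le_right (by linarith) hx1)) hle
    have he : Fintype.card ι * (819200000 * x / (n / 4 : ℕ)) ≤ A * x / n :=
      mul_div_natDiv_four_le (by omega) (by positivity) (by positivity) (by positivity) hA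
    have hiter := hF.abs_powDiff_piTensor_add_mul_le (by omega) hg hr₀ he
      (by omega : 2 * (n / 4) ≤ n') hσe (hB n' hhalf hlt) k w
    rw [hn'] at hiter
    refine hiter.trans (add_le_add (two_mul_step_error_le _ (by linarith) hn0.le hP hσ) ?_)
    calc (1 / 2) ^ k * B ≤ 2 / (A * x) * B := by gcongr
      _ = 2 * B / A * (1 / x) := by field_simp
      _ ≤ 2 * B / A * 0.86 ^ i r₀ := by gcongr

end IsSymmProb

end Piece

theorem exists_le_pow (m : ℕ) : ∃ q : ℝ, 0 < q ∧ q < 1 ∧ 0.86 ≤ q ^ m := by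
  have hlarge : (0.14 : ℝ) / (m + 1) ≤ 0.14 := div_le_self (by norm_num) (by simp)
  have hpos : (0 : ℝ) < 0.14 / (m + 1) := by positivity
  refine ⟨1 + -(0.14 / (m + 1)), by linarith, by linarith, le_trans ?_
    (one_add_mul_le_pow (by linarith) m)⟩
  have : (m : ℝ) * (0.14 / (m + 1)) ≤ 0.14 := by
    rw [mul_div_assoc', div_le_iff₀ (by positivity)]; linarith
  linarith

theorem sum_range_pow_le {q : ℝ} (h0 : 0 ≤ q) (h1 : q < 1) (n : ℕ) :
    ∑ i ∈ Finset.range n, q ^ i ≤ (1 - q)⁻¹ := by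
  rw [← tsum_geometric_of_lt_one h0 h1]
  exact (summable_geometric_of_lt_one h0 h1).sum_le_tsum _ fun i _ ↦ pow_nonneg h0 i

section Box

variable {L : ℕ} {F : (ι → ZMod (2 ^ L)) → ℝ} {x : ι → ZMod (2 ^ L)} {l : ι → ℕ}

/-- The indicator function of a box in `(ZMod M)^ι`, whose side in the direction `r` is the arc of
length `l r` starting at `-x r`. -/
def boxIndicator {M : ℕ} (x : ι → ZMod M) (l : ι → ℕ) : (ι → ZMod M) → ℝ :=
  piTensor fun r ↦ shift (x r) (arc (l r))

theorem boxIndicator_nonneg {M : ℕ} (x : ι → ZMod M) (l : ι → ℕ) : 0 ≤ boxIndicator x l :=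
  piTensor_nonneg fun r v ↦ arc_nonneg (l r) (v + x r)

theorem boxIndicator_le_one {M : ℕ} [NeZero M] (x : ι → ZMod M) {l : ι → ℕ} (hl : ∀ r, l r ≤ M)
    (v : ι → ZMod M) : boxIndicator x l v ≤ 1 :=
  Finset.prod_le_one (fun r _ ↦ arc_nonneg (l r) (v r + x r)) fun r _ ↦ arc_le_one (hl r) _

theorem abs_powDiff_groupConv_le_mul {G : Type*} [AddCommGroup G] [Fintype G] (a F : G → ℝ) (n : ℕ)
    {f : G → ℝ} {B : ℝ} (hB : ∀ w, |powDiff (AddMonoidHom.id G) F n f w| ≤ B) (w : G) :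
    |powDiff (AddMonoidHom.id G) F n (groupConv a f) w| ≤ (∑ z, |a z|) * B := by
  have hcomm : Commute (powDiff (AddMonoidHom.id G) F n) (groupConv a) :=
    ((walkOp_commute _ _ F a).pow_left n).sub_left ((walkOp_commute _ _ F a).pow_left (n + 2))
  rw [← Module.End.mul_apply, hcomm.eq, Module.End.mul_apply]
  exact abs_groupConv_le_mul a hB w

variable [DecidableEq ι]

theorem sum_abs_piTensor_scaleKernel_le (F : (ι → ZMod (2 ^ L)) → ℝ) (N : ℕ) (i : ι → ℕ) :
    ∑ v, |piTensor (fun r ↦ scaleKernel (evalHom (ZMod (2 ^ L)) r) F N (i r)) v|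
      ≤ 2 ^ Fintype.card ι := by
  simp only [piTensor, Finset.abs_prod]
  refine (sum_piTensor fun r ↦ |scaleKernel (evalHom (ZMod (2 ^ L)) r) F N (i r)|).trans_le ?_
  refine (Finset.prod_le_prod (fun r _ ↦ Finset.sum_nonneg fun x _ ↦ abs_nonneg _)
    fun r _ ↦ sum_abs_scaleKernel_le (evalHom (ZMod (2 ^ L)) r) F N (i r)).trans_eq ?_
  rw [Finset.prod_const, Finset.card_univ]

namespace IsSymmProb

theorem sum_groupConv_piTensor_scaleKernel (hF : IsSymmProb F) (N : ℕ)
    (f : ι → ZMod (2 ^ L) → ℝ) :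
    ∑ i ∈ Fintype.piFinset fun _ : ι ↦ Finset.range (L + 1),
        groupConv (piTensor fun r ↦ scaleKernel (evalHom (ZMod (2 ^ L)) r) F N (i r)) (piTensor f)
      = piTensor f := by
  funext v
  simp only [groupConv_piTensor, Finset.sum_apply, piTensor]
  rw [← Finset.prod_univ_sum (fun _ ↦ Finset.range (L + 1))
    fun r i ↦ groupConv (scaleKernel (evalHom (ZMod (2 ^ L)) r) F N i) (f r) (v r)]
  refine Finset.prod_congr rfl fun r _ ↦ ?_
  rw [← Finset.sum_apply, hF.sum_groupConv_scaleKernel]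

theorem abs_powDiff_scale_boxIndicator_le (hF : IsSymmProb F) (hl : ∀ r, l r ≤ 2 ^ L) {n : ℕ}
    (hn : 8 ≤ n) {A B : ℝ} (hA2 : 2 ≤ A) (hA : Fintype.card ι * 819200000 * 8 ≤ A)
    (hB : ∀ n', n ≤ 2 * n' → n' < n → ∀ w,
      |powDiff (AddMonoidHom.id _) F n' (boxIndicator x l) w| ≤ B)
    (i : ι → ℕ) {r₀ : ι} (hr₀ : ∀ r, i r ≤ i r₀) (w : ι → ZMod (2 ^ L)) :
    |powDiff (AddMonoidHom.id _) F n (groupConv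
        (piTensor fun r ↦ scaleKernel (evalHom (ZMod (2 ^ L)) r) F (n / 4) (i r))
        (boxIndicator x l)) w|
      ≤ (16 * A * 2 ^ (15 * Fintype.card ι + 2) / n + 2 * (2 ^ Fintype.card ι * B) / A)
        * 0.86 ^ i r₀ := by
  have hB0 : 0 ≤ B := (abs_nonneg _).trans (hB (n - 1) (by omega) (by omega) w)
  choose j g hg hgj using fun r ↦
    hF.exists_isScalePiece (evalHom (ZMod (2 ^ L)) r) (n / 4) (i r) (hl r) (x r)
  have hpiece : groupConv (piTensor fun r ↦ dyadicUnif (j r)) (piTensor g) = groupConv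
      (piTensor fun r ↦ scaleKernel (evalHom (ZMod (2 ^ L)) r) F (n / 4) (i r))
      (boxIndicator x l) := by
    rw [boxIndicator, groupConv_piTensor, groupConv_piTensor, funext hgj]
  rw [← hpiece]
  refine hF.abs_powDiff_piTensor_le_of_forall_lt hn hg hr₀ hA2 hA (fun n' hn' hlt w ↦ ?_) w
  rw [hpiece]
  exact (abs_powDiff_groupConv_le_mul _ F n' (hB n' hn' hlt) w).trans
    (mul_le_mul_of_nonneg_right (sum_abs_piTensor_scaleKernel_le F _ i) hB0)

theorem abs_powDiff_boxIndicator_le_of_forall_lt [Nonempty ι] (hF : IsSymmProb F)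
    (hl : ∀ r, l r ≤ 2 ^ L) {n : ℕ} (hn : 8 ≤ n) {A B q : ℝ} (hA2 : 2 ≤ A)
    (hA : Fintype.card ι * 819200000 * 8 ≤ A) (hq0 : 0 < q) (hq1 : q < 1)
    (hq : 0.86 ≤ q ^ Fintype.card ι)
    (hB : ∀ n', n ≤ 2 * n' → n' < n → ∀ w,
      |powDiff (AddMonoidHom.id _) F n' (boxIndicator x l) w| ≤ B) (w : ι → ZMod (2 ^ L)) :
    |powDiff (AddMonoidHom.id _) F n (boxIndicator x l) w|
      ≤ (16 * A * 2 ^ (15 * Fintype.card ι + 2) / n + 2 * (2 ^ Fintype.card ι * B) / A)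
        * (1 - q)⁻¹ ^ Fintype.card ι := by
  have hB0 : 0 ≤ B := (abs_nonneg _).trans (hB (n - 1) (by omega) (by omega) w)
  have hpiece (i : ι → ℕ) : |powDiff (AddMonoidHom.id _) F n (groupConv
        (piTensor fun r ↦ scaleKernel (evalHom (ZMod (2 ^ L)) r) F (n / 4) (i r))
        (boxIndicator x l)) w|
      ≤ (16 * A * 2 ^ (15 * Fintype.card ι + 2) / n + 2 * (2 ^ Fintype.card ι * B) / A)
        * ∏ r, q ^ i r := by
    obtain ⟨r₀, hr₀⟩ := Finite.exists_max i
    refine (hF.abs_powDiff_scale_boxIndicator_le hl hn hA2 hA hB i hr₀ w).trans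
      (mul_le_mul_of_nonneg_left ?_ (by positivity))
    calc 0.86 ^ i r₀ ≤ (q ^ Fintype.card ι) ^ i r₀ := by gcongr
      _ = ∏ _r : ι, q ^ i r₀ := by rw [pow_right_comm, Finset.prod_const, Finset.card_univ]
      _ ≤ ∏ r, q ^ i r := Finset.prod_le_prod (fun _ _ ↦ by positivity) fun r _ ↦
        pow_le_pow_of_le_one hq0.le hq1.le (hr₀ r)
  conv_lhs => rw [boxIndicator, ← hF.sum_groupConv_piTensor_scaleKernel (n / 4), map_sum,
    Finset.sum_apply]
  refine (Finset.abs_sum_le_sum_abs _ _).trans ((Finset.sum_le_sum fun i _ ↦ hpiece i).trans ?_)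
  rw [← Finset.mul_sum, ← Finset.prod_univ_sum (fun _ ↦ Finset.range (L + 1)) fun _ k ↦ q ^ k,
    Finset.prod_const, Finset.card_univ]
  gcongr
  exact sum_range_pow_le hq0.le hq1 (L + 1)

theorem abs_powDiff_boxIndicator_le_one (hF : IsSymmProb F) (hl : ∀ r, l r ≤ 2 ^ L) (n : ℕ)
    (w : ι → ZMod (2 ^ L)) :
    |powDiff (AddMonoidHom.id _) F n (boxIndicator x l) w| ≤ 1 := by
  have hnonneg (k : ℕ) := hF.walkOp_pow_nonneg (AddMonoidHom.id _) k (boxIndicator_nonneg x l) w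
  have hle (k : ℕ) := hF.walkOp_pow_le (AddMonoidHom.id _) k (boxIndicator_le_one x hl) w
  exact (abs_sub_le_of_le_of_le (hnonneg n) (hle n) (hnonneg (n + 2)) (hle (n + 2))).trans_eq
    (sub_zero 1)

theorem powDiff_boxIndicator_of_isEmpty [IsEmpty ι] (hF : IsSymmProb F) (n : ℕ) :
    powDiff (AddMonoidHom.id _) F n (boxIndicator x l) = 0 := by
  have hone : boxIndicator x l = 1 := funext fun v ↦ Fintype.prod_empty _
  rw [hone, powDiff, LinearMap.sub_apply, hF.walkOp_pow_one, hF.walkOp_pow_one, sub_self]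

end IsSymmProb

theorem induction_bound_le {m : ℕ} {A C D Γ n : ℝ} (hA : 0 < A) (hn : 0 < n) (hC : 0 ≤ C)
    (hAΓ : 2 ^ (m + 3) * Γ ≤ A) (hCD : 32 * A * D * Γ ≤ C) :
    (16 * A * D / n + 2 * (2 ^ m * (2 * C / n)) / A) * Γ ≤ C / n :=
  calc (16 * A * D / n + 2 * (2 ^ m * (2 * C / n)) / A) * Γ
      = (16 * A * D * Γ + 2 ^ (m + 3) * Γ / A * (C / 2)) / n := by
        field_simp
        ring
    _ ≤ (16 * A * D * Γ + 1 * (C / 2)) / n := by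
        gcongr
        exact (div_le_one hA).2 hAΓ
    _ ≤ C / n := by
        gcongr
        linarith

theorem exists_forall_abs_powDiff_boxIndicator_le (ι : Type*) [Fintype ι] [DecidableEq ι] :
    ∃ C : ℝ, 0 < C ∧ ∀ {L : ℕ} {F : (ι → ZMod (2 ^ L)) → ℝ}, IsSymmProb F →
      ∀ {n : ℕ}, 0 < n → ∀ (x : ι → ZMod (2 ^ L)) {l : ι → ℕ}, (∀ r, l r ≤ 2 ^ L) → ∀ w,
        |powDiff (AddMonoidHom.id _) F n (boxIndicator x l) w| ≤ C / n := by
  set m := Fintype.card ι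
  obtain ⟨q, hq0, hq1, hq⟩ := exists_le_pow m
  set Γ := (1 - q)⁻¹ ^ m
  have : 0 ≤ Γ := by have := sub_pos.2 hq1; positivity
  obtain ⟨A, hA2, hA, hAΓ⟩ : ∃ A : ℝ, 2 ≤ A ∧ m * 819200000 * 8 ≤ A ∧ 2 ^ (m + 3) * Γ ≤ A := by
    refine ⟨m * 819200000 * 8 + 2 ^ (m + 3) * Γ + 2, ?_, ?_, ?_⟩ <;>
      linarith [(by positivity : (0 : ℝ) ≤ m), (by positivity : 0 ≤ 2 ^ (m + 3) * Γ)]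
  have hA0 : 0 < A := two_pos.trans_le hA2
  set C : ℝ := 8 + 32 * A * 2 ^ (15 * m + 2) * Γ
  have hC0 : 0 < C := by positivity
  refine ⟨C, hC0, fun {L F} hF n hn x l hl w ↦ ?_⟩
  induction n using Nat.strong_induction_on generalizing w with
  | _ n ih =>
  have hn0 : (0 : ℝ) < n := by exact_mod_cast hn
  obtain hlt | hle := lt_or_ge n 8
  · refine (hF.abs_powDiff_boxIndicator_le_one hl n w).trans ((one_le_div hn0).2 ?_)
    have : (n : ℝ) ≤ 8 := by exact_mod_cast hlt.le
    exact this.trans (le_add_of_nonneg_right (by positivity))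
  obtain _ | _ := isEmpty_or_nonempty ι
  · rw [hF.powDiff_boxIndicator_of_isEmpty, Pi.zero_apply, abs_zero]
    positivity
  have hB (n' : ℕ) (hn' : n ≤ 2 * n') (hlt : n' < n) (w : ι → ZMod (2 ^ L)) :
      |powDiff (AddMonoidHom.id _) F n' (boxIndicator x l) w| ≤ 2 * C / n := by
    have hle : (n : ℝ) ≤ 2 * n' := by exact_mod_cast hn'
    refine (ih n' hlt (by omega) w).trans ?_
    rw [div_le_div_iff₀ (by linarith) hn0, mul_right_comm, mul_comm _ C]
    gcongr
  refine (hF.abs_powDiff_boxIndicator_le_of_forall_lt hl hle hA2 hA hq0 hq1 hq hB w).trans ?_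
  exact induction_bound_le hA0 hn0 hC0.le hAΓ (le_add_of_nonneg_left (by norm_num))

end Box

end Iteration

section ConvolutionPower

open ProbabilityTheory

variable {α H : Type*} [MeasurableSpace α] [MeasurableSpace H]

theorem map_pi_sum_eq_convPow [AddCommMonoid H] [MeasurableAdd₂ H] (μ : Measure α)
    [IsProbabilityMeasure μ] {f : α → H} (hf : Measurable f) (n : ℕ) :
    (Measure.pi fun _ : Fin n ↦ μ).map (fun ω ↦ ∑ i, f (ω i)) = convPow (μ.map f) n := by
  induction n with
  | zero => simp [convPow, Measure.map_const]
  | succ n ih =>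
    have hsum : Measurable fun ω : Fin n → α ↦ ∑ i, f (ω i) := by fun_prop
    have hsplit := (Measure.measurePreserving_swap.comp
      (measurePreserving_piFinSuccAbove (fun _ : Fin (n + 1) ↦ μ) (Fin.last n))).map_eq
    rw [convPow, ← ih, mconv, Measure.map_prod_map _ _ hsum hf,
      Measure.map_map measurable_add (hsum.prodMap hf), ← hsplit,
      Measure.map_map (measurable_add.comp (hsum.prodMap hf)) (by fun_prop)]
    congr 1
    funext ω
    simp [Fin.sum_univ_castSucc, MeasurableEquiv.piFinSuccAbove, Fin.insertNthEquiv,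
      Fin.init]

theorem isProbabilityMeasure_convPow [AddCommMonoid α] [MeasurableAdd₂ α] (μ : Measure α)
    [IsProbabilityMeasure μ] (n : ℕ) : IsProbabilityMeasure (convPow μ n) := by
  rw [← Measure.map_id (μ := μ), ← map_pi_sum_eq_convPow μ measurable_id n]
  exact Measure.isProbabilityMeasure_map
    (Finset.measurable_sum _ fun i _ ↦ measurable_pi_apply i).aemeasurable

theorem IsSymmProb.walkOp_apply_add {G A : Type*} [AddCommGroup G] [Fintype G] [AddCommGroup A]
    {F : G → ℝ} (hF : IsSymmProb F) (π : G →+ A) (f : A → ℝ) (v : A) :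
    walkOp π F f v = ∑ y, F y * f (v + π y) := by
  rw [walkOp_apply, ← Equiv.sum_comp (Equiv.neg G)]
  simp only [Equiv.neg_apply, hF.even, map_neg, sub_neg_eq_add]

theorem integral_convPow_add [DiscreteMeasurableSpace H] [AddCommGroup H] [Fintype H]
    (μ : Measure H) [IsProbabilityMeasure μ] (hμ : IsSymmProb fun h ↦ μ.real {h}) (n : ℕ)
    (g : H → ℝ) (w : H) :
    ∫ y, g (w + y) ∂convPow μ n = (groupConv (fun h ↦ μ.real {h}) ^ n) g w := by
  have : MeasurableAdd₂ H := ⟨Measurable.of_discrete⟩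
  induction n generalizing g w with
  | zero => simp [convPow]
  | succ n ih =>
    have := isProbabilityMeasure_convPow μ n
    rw [convPow, mconv, integral_map Measurable.of_discrete.aemeasurable
      Measurable.of_discrete.aestronglyMeasurable, integral_prod _ Integrable.of_finite, pow_succ,
      Module.End.mul_apply, ← ih]
    refine integral_congr_ae (.of_forall fun y ↦ ?_)
    simp only [integral_fintype Integrable.of_finite, hμ.walkOp_apply_add, smul_eq_mul, ← add_assoc,
      AddMonoidHom.id_apply]

end ConvolutionPower

section Symmetrization

variable {d : ℕ} {H : Type*} [MeasurableSpace H] [DiscreteMeasurableSpace H] [AddCommGroup H]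
  [Fintype H]

theorem isSymmProb_map_of_odd {F : Measure (Euc d)} [IsProbabilityMeasure F]
    (hF : IsSymmMeasure F) {c : Euc d → H} (hc : Measurable c) (hodd : ∀ x, c (-x) = -c x) :
    IsSymmProb fun h ↦ (F.map c).real {h} := by
  have := Measure.isProbabilityMeasure_map (μ := F) hc.aemeasurable
  refine ⟨fun h ↦ measureReal_nonneg, ?_, fun h ↦ ?_⟩
  · rw [sum_measureReal_singleton, Finset.coe_univ, probReal_univ]
  · have hmap (s : Set H) := map_measureReal_apply (μ := F) hc (MeasurableSet.of_discrete (s := s))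
    rw [hmap, hmap]
    conv_lhs => rw [← hF, map_measureReal_apply measurable_neg (hc .of_discrete)]
    congr 1
    ext x
    simp [hodd]

theorem integral_comp_sum_eq_groupConv_pow {F : Measure (Euc d)} [IsProbabilityMeasure F]
    (hF : IsSymmMeasure F) {c : Euc d → H} (hc : Measurable c) (hodd : ∀ x, c (-x) = -c x)
    (g : H → ℝ) (n : ℕ) :
    ∫ ω, g (∑ s, c (ω s)) ∂Measure.pi (fun _ : Fin n ↦ F)
      = (groupConv (fun h ↦ (F.map c).real {h}) ^ n) g 0 := by
  have : MeasurableAdd₂ H := ⟨Measurable.of_discrete⟩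
  have := Measure.isProbabilityMeasure_map (μ := F) hc.aemeasurable
  have hsum : Measurable fun ω : Fin n → Euc d ↦ ∑ s, c (ω s) := by fun_prop
  rw [← integral_convPow_add _ (isSymmProb_map_of_odd hF hc hodd), ← map_pi_sum_eq_convPow F hc,
    integral_map hsum.aemeasurable Measurable.of_discrete.aestronglyMeasurable]
  simp only [zero_add]

end Symmetrization

section Slab

open Filter Topology Set

theorem exists_shift_arc_intCast_eq_indicator {K M : ℕ} (hK : 2 * K < M) {A : Set ℤ}
    (hA : ∀ z ∈ A, |z| ≤ K) (hconn : A.OrdConnected) :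
    ∃ (x : ZMod M) (l : ℕ), l ≤ M ∧
      ∀ z : ℤ, |z| ≤ K → shift x (arc l) (z : ZMod M) = A.indicator 1 z := by
  classical
  obtain rfl | hne := A.eq_empty_or_nonempty
  · exact ⟨0, 0, M.zero_le, fun z _ ↦ by simp [shift, arc_zero]⟩
  have : NeZero M := ⟨by omega⟩
  obtain ⟨lo, hlo, hlo_le⟩ := Int.exists_least_of_bdd (P := (· ∈ A))
    ⟨-K, fun z hz ↦ (abs_le.1 (hA z hz)).1⟩ hne
  obtain ⟨hi, hhi, hle_hi⟩ := Int.exists_greatest_of_bdd (P := (· ∈ A))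
    ⟨K, fun z hz ↦ (abs_le.1 (hA z hz)).2⟩ hne
  have hlo_abs := abs_le.1 (hA lo hlo)
  have hhi_abs := abs_le.1 (hA hi hhi)
  have hmem (z : ℤ) : z ∈ A ↔ lo ≤ z ∧ z ≤ hi :=
    ⟨fun hz ↦ ⟨hlo_le z hz, hle_hi z hz⟩, fun hz ↦ hconn.out hlo hhi hz⟩
  refine ⟨-lo, (hi - lo + 1).toNat, by omega, fun z hz ↦ ?_⟩
  have hz_abs := abs_le.1 hz
  have hval : (((z : ZMod M) + -lo).val : ℤ) = (z - lo) % M := by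
    rw [← sub_eq_add_neg, ← Int.cast_sub, ZMod.val_intCast]
  rw [shift, arc_apply (by omega), indicator_apply, hmem, Pi.one_apply]
  congr 1
  rw [eq_iff_iff]
  obtain hle | hlt := le_or_gt lo z
  · rw [Int.emod_eq_of_lt (by omega) (by omega)] at hval
    omega
  · rw [← Int.add_emod_right, Int.emod_eq_of_lt (by omega) (by omega)] at hval
    omega

theorem eventually_le_iff_of_tendsto {α β : Type*} [LinearOrder α] [TopologicalSpace α]
    [OrderTopology α] {l : Filter β} {f : β → α} {y : α} (hf : Tendsto f l (𝓝 y))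
    (hy : ∀ i, y ≤ f i) (a : α) : ∀ᶠ i in l, (a ≤ f i ↔ a ≤ y) := by
  obtain hle | hlt := le_or_gt a y
  · exact .of_forall fun i ↦ iff_of_true (hle.trans (hy i)) hle
  · filter_upwards [hf.eventually_lt_const hlt] with i hi
    exact iff_of_false hi.not_ge hlt.not_ge

theorem tendsto_add_div_of_abs_sub_le {y c : ℝ} {z : ℕ → ℝ}
    (hz : ∀ i : ℕ, |z i - (i + 1) * y| ≤ c) (b : ℝ) :
    Tendsto (fun i ↦ (z i + b) / (i + 1)) atTop (𝓝 y) := by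
  have hbound : Tendsto (fun i : ℕ ↦ (c + |b|) * (1 / ((i : ℝ) + 1))) atTop (𝓝 0) := by
    simpa using tendsto_one_div_add_atTop_nhds_zero_nat.const_mul (c + |b|)
  refine tendsto_iff_norm_sub_tendsto_zero.2 (squeeze_zero (fun _ ↦ norm_nonneg _) (fun i ↦ ?_)
    hbound)
  have hi : (0 : ℝ) < i + 1 := by positivity
  have hrw : (z i + b) / (i + 1) - y = (z i - (i + 1) * y + b) / (i + 1) := by
    field_simp
    ring
  rw [hrw, Real.norm_eq_abs, abs_div, abs_of_pos hi, mul_one_div]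
  gcongr
  exact (abs_add_le _ _).trans (by gcongr; exact hz i)

theorem eventually_abs_le_sq_of_abs_sub_le {y c : ℝ} {z : ℕ → ℝ} (hc : 0 ≤ c)
    (hz : ∀ i : ℕ, |z i - (i + 1) * y| ≤ c) : ∀ᶠ i : ℕ in atTop, |z i| ≤ (i + 1) ^ 2 := by
  filter_upwards [eventually_ge_atTop ⌈|y| + c⌉₊] with i hi
  have hi : |y| + c ≤ i := Nat.ceil_le.1 hi
  have habs : |z i| ≤ c + (i + 1) * |y| := by
    have htri := (abs_sub_abs_le_abs_sub _ _).trans (hz i)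
    rwa [abs_mul, abs_of_pos (by positivity : (0 : ℝ) < i + 1), sub_le_iff_le_add] at htri
  nlinarith [abs_nonneg y]

/-- The exponent `L` of the grid `ZMod (2 ^ L)` on which the slabs are discretised with step
`1 / (i + 1)`: there is no wrap-around in the window `|z| ≤ (i + 1) ^ 2`. -/
def gridExp (i : ℕ) : ℕ := 2 * (i + 1) ^ 2

theorem exists_arc_eventually_eq (a b : EReal) (c : ℕ) :
    ∃ (x : ∀ i, ZMod (2 ^ gridExp i)) (l : ℕ → ℕ), (∀ i, l i ≤ 2 ^ gridExp i) ∧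
      ∀ (y : ℝ) (z : ℕ → ℤ), (∀ i : ℕ, |(z i : ℝ) - (i + 1) * y| ≤ c) → ∀ᶠ i in atTop,
        shift (x i) (arc (l i)) (z i : ZMod (2 ^ gridExp i))
          = {y : ℝ | a ≤ y ∧ y ≤ b}.indicator 1 y := by
  let A (i : ℕ) : Set ℤ := {z | |z| ≤ ((i + 1) ^ 2 : ℕ) ∧
    a ≤ ((z + c) / (i + 1) : ℝ) ∧ ((z + -c) / (i + 1) : ℝ) ≤ b}
  have hconn (i : ℕ) : (A i).OrdConnected := by
    refine ⟨fun u hu v hv z ⟨huz, hzv⟩ ↦ ⟨?_, hu.2.1.trans ?_, le_trans ?_ hv.2.2⟩⟩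
    · exact abs_le.2 ⟨(abs_le.1 hu.1).1.trans huz, hzv.trans (abs_le.1 hv.1).2⟩
    · rw [EReal.coe_le_coe_iff]; gcongr
    · rw [EReal.coe_le_coe_iff]; gcongr
  choose x l hl hxl using fun i ↦ exists_shift_arc_intCast_eq_indicator
    (M := 2 ^ gridExp i) Nat.lt_two_pow_self (fun z (hz : z ∈ A i) ↦ hz.1) (hconn i)
  refine ⟨x, l, hl, fun y z hz ↦ ?_⟩
  have hlower := eventually_le_iff_of_tendsto
    ((continuous_coe_real_ereal.tendsto y).comp (tendsto_add_div_of_abs_sub_le hz c)) (fun i ↦ by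
      rw [Function.comp_apply, EReal.coe_le_coe_iff, le_div_iff₀ (by positivity)]
      linarith [(abs_le.1 (hz i)).1]) a
  have hupper := eventually_le_iff_of_tendsto (α := ERealᵒᵈ)
    ((continuous_coe_real_ereal.tendsto y).comp (tendsto_add_div_of_abs_sub_le hz (-c)))
    (fun i ↦ by
      rw [Function.comp_apply]
      refine EReal.coe_le_coe_iff.2 ((div_le_iff₀ (by positivity)).2 ?_)
      linarith [(abs_le.1 (hz i)).2]) b
  have hwindow : ∀ᶠ i : ℕ in atTop, |z i| ≤ ((i + 1) ^ 2 : ℕ) := by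
    filter_upwards [eventually_abs_le_sq_of_abs_sub_le c.cast_nonneg hz] with i hi
    exact_mod_cast hi
  filter_upwards [hlower, hupper, hwindow] with i hlo hup hwin
  rw [hxl i _ hwin]
  refine indicator_eq_indicator ?_ rfl
  exact ⟨fun h ↦ ⟨hlo.1 h.2.1, hup.1 h.2.2⟩, fun h ↦ ⟨hwin, hlo.2 h.1, hup.2 h.2⟩⟩

end Slab

section Rounding

/-- Rounding of `s` to an integer within distance one, as an odd function of `s`: unlike `round`, it
commutes with negation, which keeps symmetric distributions symmetric. -/
def oddRound (s : ℝ) : ℤ := ⌊s / 2⌋ + ⌈s / 2⌉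

theorem oddRound_neg (s : ℝ) : oddRound (-s) = -oddRound s := by
  rw [oddRound, oddRound, neg_div, Int.floor_neg, Int.ceil_neg]
  ring

theorem abs_oddRound_sub_le (s : ℝ) : |(oddRound s : ℝ) - s| ≤ 1 := by
  rw [oddRound, Int.cast_add, abs_le]
  constructor <;> linarith [Int.floor_le (s / 2), Int.lt_floor_add_one (s / 2),
    Int.le_ceil (s / 2), Int.ceil_lt_add_one (s / 2)]

theorem measurable_oddRound : Measurable oddRound :=
  (Int.measurable_floor.comp (measurable_id.div_const 2)).add
    (Int.measurable_ceil.comp (measurable_id.div_const 2))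

variable {d m : ℕ}

/-- The discretisation with step `1 / (i + 1)` of the linear map `x ↦ (⟨x, t j⟩)_j`. -/
def discretize (t : Fin m → Euc d) (i : ℕ) (x : Euc d) : Fin m → ZMod (2 ^ gridExp i) :=
  fun j ↦ (oddRound ((i + 1) * ⟪x, t j⟫) : ℤ)

theorem measurable_discretize (t : Fin m → Euc d) (i : ℕ) : Measurable (discretize t i) := by
  refine measurable_pi_lambda _ fun j ↦ ?_
  exact (Measurable.of_discrete (f := fun z : ℤ ↦ (z : ZMod (2 ^ gridExp i)))).comp
    (measurable_oddRound.comp (by fun_prop))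

theorem discretize_neg (t : Fin m → Euc d) (i : ℕ) (x : Euc d) :
    discretize t i (-x) = -discretize t i x := by
  funext j
  rw [Pi.neg_apply, discretize, discretize, inner_neg_left, mul_neg, oddRound_neg, Int.cast_neg]

theorem sum_discretize_apply (t : Fin m → Euc d) (i : ℕ) {k : ℕ} (ω : Fin k → Euc d) (j : Fin m) :
    (∑ s, discretize t i (ω s)) j = ((∑ s, oddRound ((i + 1) * ⟪ω s, t j⟫) : ℤ) : ZMod _) := by
  simp only [Finset.sum_apply, discretize, Int.cast_sum]

theorem abs_sum_oddRound_sub_le (u : Euc d) (q : ℝ) {k : ℕ} (ω : Fin k → Euc d) :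
    |((∑ s, oddRound (q * ⟪ω s, u⟫) : ℤ) : ℝ) - q * ⟪∑ s, ω s, u⟫| ≤ k := by
  rw [sum_inner, Finset.mul_sum, Int.cast_sum, ← Finset.sum_sub_distrib]
  refine (Finset.abs_sum_le_sum_abs _ _).trans
    ((Finset.sum_le_sum fun s _ ↦ abs_oddRound_sub_le _).trans_eq ?_)
  simp

end Rounding

section Polyhedron

open Filter Topology Set

variable {d m : ℕ}

theorem prod_indicator_one {ι : Type*} [Fintype ι] (S : ι → Set ℝ) (y : ι → ℝ) :
    ∏ j, (S j).indicator (1 : ℝ → ℝ) (y j) = {y : ι → ℝ | ∀ j, y j ∈ S j}.indicator 1 y := by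
  classical
  simp only [indicator_apply, Pi.one_apply, Finset.prod_boole, Finset.mem_univ, true_imp_iff,
    mem_ofPred_eq]

theorem measurableSet_of_mem_polyhedra {X : Set (Euc d)} (hX : X ∈ polyhedra d m) :
    MeasurableSet X := by
  obtain ⟨t, a, b, rfl⟩ := hX
  have hinner (j : Fin m) : Measurable fun x : Euc d ↦ ((⟪x, t j⟫ : ℝ) : EReal) :=
    measurable_coe_real_ereal.comp (by fun_prop)
  exact measurableSet_setOfPred.2 (Measurable.forall fun j ↦
    (measurableSet_le measurable_const (hinner j)).mem.and
      (measurableSet_le (hinner j) measurable_const).mem)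

theorem exists_boxIndicator_eventually_eq {X : Set (Euc d)} (hX : X ∈ polyhedra d m) (c : ℕ) :
    ∃ (t : Fin m → Euc d) (x : ∀ i, Fin m → ZMod (2 ^ gridExp i)) (l : ℕ → Fin m → ℕ),
      (∀ i j, l i j ≤ 2 ^ gridExp i) ∧ ∀ k ≤ c, ∀ ω : Fin k → Euc d, ∀ᶠ i in atTop,
        boxIndicator (x i) (l i) (∑ s, discretize t i (ω s)) = X.indicator 1 (∑ s, ω s) := by
  obtain ⟨t, a, b, rfl⟩ := hX
  choose x l hl hxl using fun j ↦ exists_arc_eventually_eq (a j) (b j) c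
  refine ⟨t, fun i j ↦ x j i, fun i j ↦ l j i, fun i j ↦ hl j i, fun k hk ω ↦ ?_⟩
  have hslab := eventually_all.2 fun j ↦ hxl j ⟪∑ s, ω s, t j⟫
    (fun i ↦ ∑ s, oddRound ((i + 1) * ⟪ω s, t j⟫))
    fun i ↦ (abs_sum_oddRound_sub_le (t j) _ ω).trans (by exact_mod_cast hk)
  filter_upwards [hslab] with i hi
  calc boxIndicator (fun j ↦ x j i) (fun j ↦ l j i) (∑ s, discretize t i (ω s))
      = ∏ j, shift (x j i) (arc (l j i)) ((∑ s, discretize t i (ω s)) j) := rfl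
    _ = ∏ j, {y : ℝ | a j ≤ y ∧ y ≤ b j}.indicator 1 ⟪∑ s, ω s, t j⟫ :=
        Finset.prod_congr rfl fun j _ ↦ by rw [sum_discretize_apply, hi j]
    _ = _ := prod_indicator_one _ _

theorem tendsto_integral_boxIndicator_discretize {X : Set (Euc d)} (hX : MeasurableSet X)
    {t : Fin m → Euc d} {x : ∀ i, Fin m → ZMod (2 ^ gridExp i)} {l : ℕ → Fin m → ℕ}
    (hl : ∀ i j, l i j ≤ 2 ^ gridExp i) (F : Measure (Euc d)) [IsProbabilityMeasure F] {k : ℕ}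
    (hlim : ∀ ω : Fin k → Euc d, ∀ᶠ i in atTop,
      boxIndicator (x i) (l i) (∑ s, discretize t i (ω s)) = X.indicator 1 (∑ s, ω s)) :
    Tendsto (fun i ↦ ∫ ω, boxIndicator (x i) (l i) (∑ s, discretize t i (ω s))
        ∂Measure.pi fun _ : Fin k ↦ F) atTop (𝓝 (convPow F k X).toReal) := by
  have hsum : Measurable fun ω : Fin k → Euc d ↦ ∑ s, ω s := by fun_prop
  have hconv : (convPow F k X).toReal
      = ∫ ω, X.indicator 1 (∑ s, ω s) ∂Measure.pi fun _ : Fin k ↦ F := by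
    have hmap := map_pi_sum_eq_convPow F measurable_id k
    rw [Measure.map_id] at hmap
    rw [← hmap, ← integral_map hsum.aemeasurable
      (measurable_one.indicator hX).aestronglyMeasurable, integral_indicator_one hX]
    rfl
  rw [hconv]
  refine tendsto_integral_of_dominated_convergence 1 (fun i ↦ ?_) (integrable_const 1)
    (fun i ↦ .of_forall fun ω ↦ ?_) (.of_forall fun ω ↦ tendsto_const_nhds.congr' ?_)
  · have hdisc := measurable_discretize t i
    have hsum : Measurable fun ω : Fin k → Euc d ↦ ∑ s, discretize t i (ω s) := by fun_prop
    exact (Measurable.of_discrete.comp hsum).aestronglyMeasurable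
  · rw [Real.norm_eq_abs, abs_of_nonneg (boxIndicator_nonneg _ _ _)]
    exact boxIndicator_le_one _ (hl i) _
  · filter_upwards [hlim ω] with i hi using hi.symm

theorem abs_convPow_sub_convPow_add_two_le {n : ℕ} {B : ℝ}
    (hB : ∀ {L : ℕ} {F : (Fin m → ZMod (2 ^ L)) → ℝ}, IsSymmProb F →
      ∀ (x : Fin m → ZMod (2 ^ L)) {l : Fin m → ℕ}, (∀ j, l j ≤ 2 ^ L) → ∀ w,
        |powDiff (AddMonoidHom.id _) F n (boxIndicator x l) w| ≤ B)
    {F : Measure (Euc d)} [IsProbabilityMeasure F] (hF : IsSymmMeasure F) {X : Set (Euc d)}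
    (hX : X ∈ polyhedra d m) :
    |(convPow F n X).toReal - (convPow F (n + 2) X).toReal| ≤ B := by
  obtain ⟨t, x, l, hl, hlim⟩ := exists_boxIndicator_eventually_eq hX (n + 2)
  have htendsto (k : ℕ) (hk : k ≤ n + 2) := tendsto_integral_boxIndicator_discretize
    (measurableSet_of_mem_polyhedra hX) hl F (hlim k hk)
  refine le_of_tendsto ((htendsto n (by omega)).sub (htendsto (n + 2) le_rfl)).abs
    (.of_forall fun i ↦ ?_)
  have hmeas := measurable_discretize t i
  have hodd := discretize_neg t i
  rw [integral_comp_sum_eq_groupConv_pow hF hmeas hodd,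
    integral_comp_sum_eq_groupConv_pow hF hmeas hodd]
  exact hB (isSymmProb_map_of_odd hF hmeas hodd) (x i) (hl i) 0

end Polyhedron

theorem abs_sub_add_two_mul_le {P : ℕ → ℝ} {C : ℝ} (hC : 0 ≤ C)
    (hP : ∀ {n : ℕ}, 0 < n → |P n - P (n + 2)| ≤ C / n) {n : ℕ} (hn : 0 < n) (k : ℕ) :
    |P n - P (n + 2 * k)| ≤ C * k * (n : ℝ)⁻¹ := by
  induction k with
  | zero => simp
  | succ k ih =>
    have hstep : |P (n + 2 * k) - P (n + 2 * k + 2)| ≤ C * (n : ℝ)⁻¹ := by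
      refine (hP (by omega)).trans ?_
      rw [← div_eq_mul_inv]
      gcongr
      omega
    refine (abs_sub_le _ (P (n + 2 * k)) _).trans ((add_le_add ih hstep).trans_eq ?_)
    push_cast
    ring

end

theorem stmt10 :
    ∃ C : ℕ → ℝ, (∀ m, 0 < C m) ∧
      ∀ (d m k n : ℕ), 0 < d → 0 < m → 0 < k → 0 < n →
        ∀ F : Measure (Euc d), IsProbabilityMeasure F → IsSymmMeasure F →
          rhoPoly m (convPow F n) (convPow F (n + 2 * k)) ≤ C m * k * (n : ℝ)⁻¹ := by
  choose C hC_pos hC using fun m : ℕ ↦ exists_forall_abs_powDiff_boxIndicator_le (Fin m)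
  refine ⟨C, hC_pos, fun d m k n _ _ _ hn F _ hF ↦ ?_⟩
  have hbound : 0 ≤ C m * k * (n : ℝ)⁻¹ := by have := hC_pos m; positivity
  refine Real.iSup_le (fun X ↦ Real.iSup_le (fun hX ↦ ?_) hbound) hbound
  exact abs_sub_add_two_mul_le (P := fun n ↦ (convPow F n X).toReal) (hC_pos m).le
    (fun hn ↦ abs_convPow_sub_convPow_add_two_le (fun hF' x l hl w ↦ hC m hF' hn x hl w) hF hX) hn k
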